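/- arXiv:2402.17795 — 2 statements merged into one kernel-verified Lean document; each statement's English description precedes it below -/
import Mathlib

section
/- Let a : ℝ → [0,1] satisfy (A1') and have √a κ-Lipschitz, and H ∈ 𝓗_sqc(α0,α1,γ,η) with γ > 2; let λ0 := inf{μ : a u'' + H(x,u') = μ admits a continuous viscosity supersolution on ℝ} and let λ > λ0. Let u1, u2 be viscosity solutions of a(x)u'' + H(x,u') = λ on ℝ, and v1, v2 viscosity solutions of a(x)u'' + H(x,u') = λ0 on ℝ. (a) If u_i' ≥ v_i' almost everywhere on ℝ for each i ∈ {1,2}, then u1 − u2 is constant on ℝ. (b) If u_i' ≤ v_i' almost everywhere on ℝ for each i ∈ {1,2}, then u1 − u2 is constant on ℝ. -/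
open Real Set Filter Topology MeasureTheory

noncomputable section

/-- The Hamiltonian class `𝓗(α₀, α₁, γ)`: growth condition (H1) and the local
Lipschitz conditions (H2), (H3). -/
def HamClass (a0 a1 g : ℝ) (H : ℝ → ℝ → ℝ) : Prop :=
  (∀ x p : ℝ, a0 * |p| ^ g - 1 / a0 ≤ H x p) ∧
  (∀ x p : ℝ, H x p ≤ a1 * (|p| ^ g + 1)) ∧
  (∀ x p q : ℝ, |H x p - H x q| ≤ a1 * (|p| + |q| + 1) ^ (g - 1) * |p - q|) ∧
  (∀ x y p : ℝ, |H x p - H y p| ≤ a1 * (|p| ^ g + 1) * |x - y|)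

/-- The strictly quasiconvex class `𝓗_sqc(α₀, α₁, γ, η)` with (unique) minimizer map
`phat`. -/
def HamSqc (a0 a1 g eta : ℝ) (H : ℝ → ℝ → ℝ) (phat : ℝ → ℝ) : Prop :=
  HamClass a0 a1 g H ∧
  (∀ x p : ℝ, H x (phat x) ≤ H x p) ∧
  (∀ x p : ℝ, (∀ q : ℝ, H x p ≤ H x q) → p = phat x) ∧
  (∀ x p1 p2 : ℝ, p1 < p2 → p2 ≤ phat x → eta * |p1 - p2| ≤ H x p1 - H x p2) ∧
  (∀ x p1 p2 : ℝ, phat x ≤ p1 → p1 < p2 → eta * |p1 - p2| ≤ H x p2 - H x p1)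

/-- A continuous `u` is a viscosity supersolution of `a(x) u'' + H(x, u') = lam` on `U`:
at every local minimum point `x0 ∈ U` of `u - φ`, with `φ` of class `C²`, one has
`a(x0) φ''(x0) + H(x0, φ'(x0)) ≤ lam`. -/
def ViscSuperOn (a : ℝ → ℝ) (H : ℝ → ℝ → ℝ) (lam : ℝ) (U : Set ℝ) (u : ℝ → ℝ) : Prop :=
  ∀ φ : ℝ → ℝ, ContDiff ℝ 2 φ → ∀ x0 ∈ U, IsLocalMin (fun x => u x - φ x) x0 →
    a x0 * deriv (deriv φ) x0 + H x0 (deriv φ x0) ≤ lam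

/-- Viscosity subsolution of `a(x) u'' + H(x, u') = lam` on `U`. -/
def ViscSubOn (a : ℝ → ℝ) (H : ℝ → ℝ → ℝ) (lam : ℝ) (U : Set ℝ) (u : ℝ → ℝ) : Prop :=
  ∀ φ : ℝ → ℝ, ContDiff ℝ 2 φ → ∀ x0 ∈ U, IsLocalMax (fun x => u x - φ x) x0 →
    lam ≤ a x0 * deriv (deriv φ) x0 + H x0 (deriv φ x0)

/-- Viscosity solution of `a(x) u'' + H(x, u') = lam` on `U`. -/
def ViscSolOn (a : ℝ → ℝ) (H : ℝ → ℝ → ℝ) (lam : ℝ) (U : Set ℝ) (u : ℝ → ℝ) : Prop :=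
  ViscSubOn a H lam U u ∧ ViscSuperOn a H lam U u

/-- The critical value `λ₀`: the infimum of the levels `lam` at which the stationary
equation `a u'' + H(x, u') = lam` admits a continuous viscosity supersolution on `ℝ`. -/
def CriticalValue (a : ℝ → ℝ) (H : ℝ → ℝ → ℝ) : ℝ :=
  sInf {lam : ℝ | ∃ u : ℝ → ℝ, Continuous u ∧ ViscSuperOn a H lam Set.univ u}

/-- Condition (A1'): `a ≢ 0` and every connected component of `A := {a > 0}` is bounded
(components of an open subset of `ℝ` are automatically open intervals). -/
def CondA1' (a : ℝ → ℝ) : Prop :=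
  (∃ x, a x ≠ 0) ∧
  ∀ x, 0 < a x → Bornology.IsBounded (connectedComponentIn {y : ℝ | 0 < a y} x)

def QSuper (a : ℝ → ℝ) (H : ℝ → ℝ → ℝ) (lam : ℝ) (u : ℝ → ℝ) : Prop :=
  ∀ A B x0 : ℝ, IsLocalMin (fun x => u x - (A * x ^ 2 + B * x)) x0 →
    a x0 * (2 * A) + H x0 (2 * A * x0 + B) ≤ lam

def QSub (a : ℝ → ℝ) (H : ℝ → ℝ → ℝ) (lam : ℝ) (u : ℝ → ℝ) : Prop :=
  ∀ A B x0 : ℝ, IsLocalMax (fun x => u x - (A * x ^ 2 + B * x)) x0 →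
    lam ≤ a x0 * (2 * A) + H x0 (2 * A * x0 + B)

lemma quad_derivs (A B x0 : ℝ) : deriv (fun x : ℝ => A * x ^ 2 + B * x) x0 = 2 * A * x0 + B ∧
    deriv (deriv (fun x : ℝ => A * x ^ 2 + B * x)) x0 = 2 * A := by
  have h1 : ∀ x : ℝ, HasDerivAt (fun x : ℝ => A * x ^ 2 + B * x) (2 * A * x + B) x := by
    intro x
    have := ((hasDerivAt_pow 2 x).const_mul A).fun_add ((hasDerivAt_id' x).const_mul B)
    refine this.congr_deriv ?_
    norm_num; ring
  have h2 : deriv (fun x : ℝ => A * x ^ 2 + B * x) = fun x => 2 * A * x + B :=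
    funext fun x => (h1 x).deriv
  refine ⟨(h1 x0).deriv, ?_⟩
  rw [h2]
  simp

lemma QSuper.neg {a H lam u} (h : QSuper a H lam u) :
    QSub a (fun x p => - H x (-p)) (-lam) (fun x => - u x) := by
  intro A B x0 hm
  have := h (-A) (-B) x0 (by
    have := hm.neg
    refine this.congr (Eventually.of_forall fun x => ?_)
    simp; ring)
  have e : 2 * -A * x0 + -B = -(2 * A * x0 + B) := by ring
  rw [e] at this
  simp only
  linarith

lemma QSub.neg {a H lam u} (h : QSub a H lam u) :
    QSuper a (fun x p => - H x (-p)) (-lam) (fun x => - u x) := by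
  intro A B x0 hm
  have := h (-A) (-B) x0 (by
    have := hm.neg
    refine this.congr (Eventually.of_forall fun x => ?_)
    simp; ring)
  have e : 2 * -A * x0 + -B = -(2 * A * x0 + B) := by ring
  rw [e] at this
  simp only
  linarith

lemma refl_tendsto (x0 : ℝ) : Tendsto (fun x : ℝ => -x) (𝓝 (-x0)) (𝓝 x0) := by
  have := (continuous_neg (G := ℝ)).tendsto (-x0)
  simpa using this

lemma QSuper.refl {a H lam u} (h : QSuper a H lam u) :
    QSuper (fun x => a (-x)) (fun x p => H (-x) (-p)) lam (fun x => u (-x)) := by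
  intro A B x0 hm
  have := h A (-B) (-x0) (by
    have h2 := (refl_tendsto x0).eventually hm
    filter_upwards [h2] with x hx
    simp only [neg_neg] at hx ⊢
    nlinarith [hx])
  have e : 2 * A * -x0 + -B = -(2 * A * x0 + B) := by ring
  rw [e] at this
  exact this

lemma QSub.refl {a H lam u} (h : QSub a H lam u) :
    QSub (fun x => a (-x)) (fun x p => H (-x) (-p)) lam (fun x => u (-x)) := by
  intro A B x0 hm
  have := h A (-B) (-x0) (by
    have h2 := (refl_tendsto x0).eventually hm
    filter_upwards [h2] with x hx
    simp only [neg_neg] at hx ⊢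
    nlinarith [hx])
  have e : 2 * A * -x0 + -B = -(2 * A * x0 + B) := by ring
  rw [e] at this
  exact this

lemma log_quad {P Q : ℝ} (hP : 0 < P) (hQ : P / 2 < Q) :
    (P - Q) / Q ≤ -(1 / P * (Q - P)) + 2 * (1 / P) ^ 2 * (Q - P) ^ 2 := by
  have hQ0 : 0 < Q := by linarith
  have : -(1 / P * (Q - P)) + 2 * (1 / P) ^ 2 * (Q - P) ^ 2 - (P - Q) / Q
    = (Q - P) ^ 2 * (2 * Q - P) / (P ^ 2 * Q) := by
    field_simp; ring
  have h2 : 0 ≤ (Q - P) ^ 2 * (2 * Q - P) / (P ^ 2 * Q) := by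
    have : 0 ≤ 2 * Q - P := by linarith
    positivity
  linarith

set_option maxHeartbeats 1000000 in
/-- one-sided Lipschitz bound -/
lemma lip_one {a H lam u} (h : QSuper a H lam u) (hu : Continuous u)
    (ha : ∀ x, a x ∈ Icc (0:ℝ) 1) {c M : ℝ} (hc : 0 < c) (hM : 0 < M)
    (hco : ∀ x p, M ≤ p → lam + c * p ^ 2 < H x p) :
    ∀ x y, x < y → u y - u x ≤ 2 * M * (y - x) := by
  by_contra! hcon
  obtain ⟨x, y, hxy, hlt⟩ := hcon
  have hnomin : ∀ t, ¬ IsLocalMin (fun s => u s - 2 * M * s) t := by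
    intro t ht
    have h1 := h 0 (2 * M) t (by simpa using ht)
    have h2 := hco t (2 * M) (by linarith)
    simp at h1
    nlinarith [sq_nonneg M]
  have hf : Continuous (fun s => u s - 2 * M * s) := by fun_prop
  have hmono : ∀ s t, s < t → t ≤ x → 2 * M * (t - s) < u t - u s := by
    by_contra! hc2
    obtain ⟨s, t, hst, htx, hle⟩ := hc2
    obtain ⟨m, hm, hmin⟩ := isCompact_Icc.exists_isMinOn (nonempty_Icc.2 (by linarith : s ≤ y))
      hf.continuousOn
    have hmx := hmin (show x ∈ Icc s y from ⟨by linarith, by linarith⟩)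
    have hmt := hmin (show t ∈ Icc s y from ⟨by linarith, by linarith⟩)
    simp only [mem_ofPred_eq] at hmx hmt
    have hmy : m ≠ y := by rintro rfl; linarith
    by_cases hms : m = s
    · apply hnomin t
      have : Icc s y ∈ 𝓝 t := Icc_mem_nhds hst (by linarith)
      filter_upwards [this] with z hz
      have := hmin hz
      simp only [mem_ofPred_eq] at this
      subst hms
      linarith
    · apply hnomin m
      exact hmin.isLocalMin (Icc_mem_nhds (lt_of_le_of_ne hm.1 (Ne.symm hms))
        (lt_of_le_of_ne hm.2 hmy))
  set al := c / 4 with hal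
  have hal0 : 0 < al := by positivity
  set T := 1 / (al * M) with hT
  have hT0 : 0 < T := by positivity
  obtain ⟨K, hK1, hK2⟩ : ∃ K, M < K ∧ (u (x - T) - u (x - 2 * T)) / T < K :=
    ⟨max M ((u (x - T) - u (x - 2 * T)) / T) + 1, by
      linarith [le_max_left M ((u (x - T) - u (x - 2 * T)) / T)], by
      linarith [le_max_right M ((u (x - T) - u (x - 2 * T)) / T)]⟩
  have hK0 : 0 < K := by linarith
  rw [div_lt_iff₀ hT0] at hK2
  obtain ⟨x0, hx0, hmax⟩ := isCompact_Icc.exists_isMaxOn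
    (nonempty_Icc.2 (by linarith : x - 2 * T ≤ x - T))
    (f := fun s => u s - K * s) (by fun_prop)
  have hx0' : x0 < x - T := by
    refine lt_of_le_of_ne hx0.2 ?_
    rintro rfl
    have := hmax (show x - 2 * T ∈ Icc (x - 2 * T) (x - T) from ⟨le_rfl, by linarith⟩)
    simp only [mem_ofPred_eq] at this
    nlinarith
  have hx0K : ∀ t, x0 ≤ t → t ≤ x - T → u t - u x0 ≤ K * (t - x0) := by
    intro t h1 h2
    have := hmax (show t ∈ Icc (x - 2 * T) (x - T) from ⟨by linarith [hx0.1], h2⟩)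
    simp only [mem_ofPred_eq] at this
    linarith
  set D := 1 / (2 * al * K) with hD
  have hD0 : 0 < D := by positivity
  have hDT : 2 * D < T * 2 := by
    rw [hD, hT]
    have : 1 / (2 * al * K) < 1 / (al * M) := by
      apply one_div_lt_one_div_of_lt (by positivity)
      nlinarith
    linarith
  set b := x0 - D with hb
  have hbT : x0 < b + T := by linarith
  set g : ℝ → ℝ := fun t => u t - (1 / al) * Real.log (t - b) with hg
  have hgc : ContinuousOn g (Icc x0 (b + T)) := by
    apply ContinuousOn.sub hu.continuousOn
    apply ContinuousOn.mul continuousOn_const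
    apply ContinuousOn.log (by fun_prop)
    intro t ht
    have := ht.1
    have : 0 < t - b := by linarith
    exact this.ne'
  -- log estimate
  have hlog : ∀ t s, 0 < t - b → 0 < s - b →
      Real.log (t - b) - Real.log (s - b) ≤ (t - s) / (s - b) := by
    intro t s ht hs
    have h1 := Real.log_le_sub_one_of_pos (div_pos ht hs)
    rw [Real.log_div ht.ne' hs.ne'] at h1
    have : (t - b) / (s - b) - 1 = (t - s) / (s - b) := by
      field_simp; ring
    linarith
  obtain ⟨m, hm, hmin⟩ := isCompact_Icc.exists_isMinOn (nonempty_Icc.2 hbT.le) hgc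
  have hmb : 0 < m - b := by linarith [hm.1]
  have hmx0 : m ≠ x0 := by
    rintro rfl
    set s := (min (x - T - m) (min (b + T - m) D)) / 2 with hs
    have hs0 : 0 < min (x - T - m) (min (b + T - m) D) := by
      refine lt_min (by linarith) (lt_min (by linarith) hD0)
    have e1 : min (x - T - m) (min (b + T - m) D) ≤ x - T - m := min_le_left _ _
    have e2 : min (x - T - m) (min (b + T - m) D) ≤ b + T - m :=
      (min_le_right _ _).trans (min_le_left _ _)
    have e3 : min (x - T - m) (min (b + T - m) D) ≤ D :=
      (min_le_right _ _).trans (min_le_right _ _)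
    have h1 := hmin (show m + s ∈ Icc m (b + T) from ⟨by linarith, by linarith⟩)
    simp only [mem_ofPred_eq, hg] at h1
    have h2 := hx0K (m + s) (by linarith) (by linarith)
    have h3 := hlog m (m + s) hmb (by linarith)
    have e4 : (m - (m + s)) / (m + s - b) = - (s / (D + s)) := by
      rw [hb]; rw [← neg_div]; congr 1 <;> ring
    rw [e4] at h3
    have e5 : K * s < 1 / al * (s / (D + s)) := by
      have hDK : 2 * al * K * D = 1 := by rw [hD]; field_simp
      have hs1 : 0 < s := by linarith
      have hsD : s < D := by linarith
      rw [div_mul_div_comm, lt_div_iff₀ (by positivity)]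
      have : al * K * (D + s) < 1 := by
        have : 0 < al * K := by positivity
        nlinarith
      nlinarith
    have e6 : 1 / al * (s / (D + s)) ≤ 1 / al * (Real.log (m + s - b) - Real.log (m - b)) := by
      apply mul_le_mul_of_nonneg_left _ (by positivity)
      linarith
    rw [mul_sub] at e6
    have : m + s - m = s := by ring
    rw [this] at h2
    linarith
  have hmd : m ≠ b + T := by
    rintro hmeq
    set t := max ((x0 + (b + T)) / 2) (b + T / 2) with ht
    have t1 : x0 < t := lt_of_lt_of_le (by linarith) (le_max_left _ _)
    have t2 : b + T / 2 ≤ t := le_max_right _ _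
    have t3 : t < b + T := max_lt (by linarith) (by linarith)
    have h1 := hmin (show t ∈ Icc x0 (b + T) from ⟨by linarith, by linarith⟩)
    simp only [mem_ofPred_eq, hg] at h1
    have h2 := hmono t m (by linarith) (by linarith)
    have h3 := hlog m t hmb (by linarith)
    have hTM : al * M * T = 1 := by rw [hT]; field_simp
    have e5 : 1 / al * ((m - t) / (t - b)) ≤ 2 * M * (m - t) := by
      rw [div_mul_div_comm, div_le_iff₀ (by have : 0 < t - b := by linarith
                                            positivity)]
      have : 1 ≤ 2 * M * (al * (t - b)) := by
        have : 0 < al * M := by positivity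
        nlinarith
      nlinarith
    have e6 : 1 / al * (Real.log (m - b) - Real.log (t - b)) ≤ 1 / al * ((m - t) / (t - b)) :=
      mul_le_mul_of_nonneg_left h3 (by positivity)
    rw [mul_sub] at e6
    linarith
  have hm1 : x0 < m := lt_of_le_of_ne hm.1 (Ne.symm hmx0)
  have hm2 : m < b + T := lt_of_le_of_ne hm.2 hmd
  set p := 1 / (al * (m - b)) with hp
  have hpM : M ≤ p := by
    rw [hp, le_div_iff₀ (by positivity)]
    have hTM : al * M * T = 1 := by rw [hT]; field_simp
    have : 0 < al * M := by positivity
    nlinarith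
  have key := h (-2 * al * p ^ 2) (p + 4 * al * p ^ 2 * m) m (by
    have n1 : Icc x0 (b + T) ∈ 𝓝 m := Icc_mem_nhds hm1 hm2
    have n2 : Ioi (m - (m - b) / 2) ∈ 𝓝 m := Ioi_mem_nhds (by linarith)
    filter_upwards [n1, n2] with s hs1 hs2
    have h1 := hmin hs1
    simp only [mem_ofPred_eq, hg] at h1
    have hs2' : m - (m - b) / 2 < s := hs2
    have hsb : 0 < s - b := by linarith
    have h3 := hlog m s hmb hsb
    have hpm : p * (al * (m - b)) = 1 := by rw [hp]; field_simp
    -- (m-s)/(s-b) ≤ -(al p (s-m)) + 2 al^2 p^2 (s-m)^2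
    have e1 : (m - s) / (s - b) ≤ al * (-(p * (s - m)) + 2 * al * p ^ 2 * (s - m) ^ 2) := by
      have hq : al * p = 1 / (m - b) := by rw [hp]; field_simp
      have h10 := log_quad hmb (by linarith : (m - b) / 2 < s - b)
      have e10 : (m - b) - (s - b) = m - s := by ring
      have e11 : (s - b) - (m - b) = s - m := by ring
      rw [e10, e11] at h10
      have : al * (-(p * (s - m)) + 2 * al * p ^ 2 * (s - m) ^ 2)
          = -((al * p) * (s - m)) + 2 * (al * p) ^ 2 * (s - m) ^ 2 := by ring
      rw [this, hq]
      exact h10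
    have e2 : 1 / al * (Real.log (m - b) - Real.log (s - b)) ≤
        1 / al * (al * (-(p * (s - m)) + 2 * al * p ^ 2 * (s - m) ^ 2)) :=
      mul_le_mul_of_nonneg_left (h3.trans e1) (by positivity)
    rw [← mul_assoc, one_div_mul_cancel hal0.ne', one_mul, mul_sub] at e2
    nlinarith)
  have e : 2 * (-2 * al * p ^ 2) * m + (p + 4 * al * p ^ 2 * m) = p := by ring
  rw [e] at key
  have h5 := hco m p hpM
  have h6 := (ha m).2
  have h7 := (ha m).1
  have h8 : a m * (2 * (-2 * al * p ^ 2)) = - (a m * (c * p ^ 2)) := by rw [hal]; ring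
  have h9 : a m * (c * p ^ 2) ≤ 1 * (c * p ^ 2) :=
    mul_le_mul_of_nonneg_right h6 (by positivity)
  linarith

lemma lip_two {a H lam u} (h : QSuper a H lam u) (hu : Continuous u)
    (ha : ∀ x, a x ∈ Icc (0:ℝ) 1) {c M : ℝ} (hc : 0 < c) (hM : 0 < M)
    (hco : ∀ x p, M ≤ |p| → lam + c * p ^ 2 < H x p) :
    ∀ x y, |u y - u x| ≤ 2 * M * |y - x| := by
  have h1 := lip_one h hu ha hc hM (fun x p hp => hco x p (hp.trans (le_abs_self p)))
  have h2 := lip_one h.refl (by fun_prop) (fun x => ha (-x)) hc hM (fun x p hp => by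
    have := hco (-x) (-p) (by rw [abs_neg]; exact hp.trans (le_abs_self p))
    simpa using this)
  have key : ∀ x y, x < y → |u y - u x| ≤ 2 * M * |y - x| := by
    intro x y hxy
    rw [abs_of_pos (sub_pos.2 hxy), abs_le]
    have := h2 (-y) (-x) (by linarith)
    simp only [neg_neg] at this
    have := h1 x y hxy
    constructor <;> linarith
  intro x y
  rcases lt_trichotomy x y with hxy | rfl | hxy
  · exact key x y hxy
  · simp
  · rw [abs_sub_comm, abs_sub_comm y x]; exact key y x hxy

lemma visc_convex {u : ℝ → ℝ} (hu : Continuous u) {s t k : ℝ}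
    (h : ∀ A B x0, x0 ∈ Ioo s t → IsLocalMax (fun x => u x - (A * x ^ 2 + B * x)) x0 → k ≤ 2 * A) :
    ConvexOn ℝ (Ioo s t) (fun x => u x - k / 2 * x ^ 2) := by
  apply convexOn_of_slope_mono_adjacent (convex_Ioo s t)
  intro x y z hx hz hxy hyz
  set g : ℝ → ℝ := fun x => u x - k / 2 * x ^ 2 with hg
  by_contra! hcon
  set σ := (g z - g x) / (z - x) with hσ
  have hzx : 0 < z - x := by linarith
  have hσ' : σ * (z - x) = g z - g x := by rw [hσ]; field_simp
  -- positivity at y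
  have hpos : 0 < g y - g x - σ * (y - x) := by
    rw [div_lt_div_iff₀ (by linarith) (by linarith)] at hcon
    have : (g y - g x - σ * (y - x)) * (z - x)
      = (g y - g x) * (z - y) - (g z - g y) * (y - x) := by
      have : (g y - g x - σ * (y - x)) * (z - x)
        = (g y - g x) * (z - x) - (σ * (z - x)) * (y - x) := by ring
      rw [this, hσ']; ring
    by_contra! hle
    have hcon' : (g z - g y) * (y - x) < (g y - g x) * (z - y) := hcon
    have := mul_nonpos_of_nonpos_of_nonneg hle hzx.le
    linarith
  have hyy : 0 < (y - x) * (z - y) := mul_pos (by linarith) (by linarith)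
  obtain ⟨e, he, he2⟩ : ∃ e > 0, e * ((y - x) * (z - y)) < g y - g x - σ * (y - x) :=
    ⟨(g y - g x - σ * (y - x)) / ((y - x) * (z - y)) / 2, by positivity, by
      field_simp; linarith⟩
  set φ : ℝ → ℝ := fun w => u w - ((k / 2 - e) * w ^ 2 + (σ + e * (x + z)) * w) with hφ
  have hφc : Continuous φ := by fun_prop
  obtain ⟨m, hm, hmax⟩ := isCompact_Icc.exists_isMaxOn (nonempty_Icc.2 (by linarith : x ≤ z))
    hφc.continuousOn
  have hmy := hmax (show y ∈ Icc x z from ⟨hxy.le, hyz.le⟩)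
  simp only [mem_ofPred_eq] at hmy
  have hxy' : φ x < φ y := by simp only [hφ, hg] at *; nlinarith
  have hzy' : φ z < φ y := by simp only [hφ, hg] at *; nlinarith
  have hmx : m ≠ x := by rintro rfl; linarith
  have hmz : m ≠ z := by rintro rfl; linarith
  have m1 : x < m := lt_of_le_of_ne hm.1 (Ne.symm hmx)
  have m2 : m < z := lt_of_le_of_ne hm.2 hmz
  have := h (k / 2 - e) (σ + e * (x + z)) m ⟨hx.1.trans m1, m2.trans hz.2⟩
    (hmax.isLocalMax (Icc_mem_nhds m1 m2))
  linarith

lemma visc_concave {u : ℝ → ℝ} (hu : Continuous u) {s t k : ℝ}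
    (h : ∀ A B x0, x0 ∈ Ioo s t → IsLocalMin (fun x => u x - (A * x ^ 2 + B * x)) x0 → 2 * A ≤ k) :
    ConcaveOn ℝ (Ioo s t) (fun x => u x - k / 2 * x ^ 2) := by
  have := visc_convex (u := fun x => - u x) (k := -k) (s := s) (t := t) (by fun_prop) (by
    intro A B x0 hx0 hm
    have := h (-A) (-B) x0 hx0 (by
      have := hm.neg
      refine this.congr (Eventually.of_forall fun x => ?_)
      simp; ring)
    linarith)
  rw [← neg_convexOn_iff]
  refine this.congr (fun x _ => ?_)
  simp; ring

/-- convex from below, concave from above ⇒ differentiable -/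
lemma diff_of_conv {u : ℝ → ℝ} {s t k x : ℝ} (hx : x ∈ Ioo s t)
    (h1 : ConvexOn ℝ (Ioo s t) (fun x => u x - (-k) / 2 * x ^ 2))
    (h2 : ConcaveOn ℝ (Ioo s t) (fun x => u x - k / 2 * x ^ 2)) : DifferentiableAt ℝ u x := by
  have hxi : x ∈ interior (Ioo s t) := by rwa [interior_Ioo]
  have h2' := h2.neg
  have q : ∀ c : ℝ, HasDerivAt (fun x : ℝ => c * x ^ 2) (c * (2 * x)) x := by
    intro c
    simpa using (hasDerivAt_pow 2 x).const_mul c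
  have r1 := (h1.hasDerivWithinAt_rightDeriv_of_mem_interior hxi).fun_add
    (q (-k / 2)).hasDerivWithinAt
  have l1 := (h1.hasDerivWithinAt_leftDeriv_of_mem_interior hxi).fun_add
    (q (-k / 2)).hasDerivWithinAt
  have o1 := h1.leftDeriv_le_rightDeriv_of_mem_interior hxi
  have r2 := ((h2'.hasDerivWithinAt_rightDeriv_of_mem_interior hxi).fun_neg).fun_add
    (q (k / 2)).hasDerivWithinAt
  have l2 := ((h2'.hasDerivWithinAt_leftDeriv_of_mem_interior hxi).fun_neg).fun_add
    (q (k / 2)).hasDerivWithinAt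
  have o2 := h2'.leftDeriv_le_rightDeriv_of_mem_interior hxi
  simp only [sub_add_cancel, Pi.neg_apply, neg_neg] at r1 l1 r2 l2
  have er := (uniqueDiffWithinAt_Ioi x).eq_deriv _ r1 r2
  have el := (uniqueDiffWithinAt_Iio x).eq_deriv _ l1 l2
  have : derivWithin (fun x => u x - -k / 2 * x ^ 2) (Iio x) x
     = derivWithin (fun x => u x - -k / 2 * x ^ 2) (Ioi x) x := by
    linarith
  rw [this] at l1
  have := (hasDerivWithinAt_Ioi_iff_Ici.1 r1).union (hasDerivWithinAt_Iio_iff_Iic.1 l1)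
  rw [Ici_union_Iic, hasDerivWithinAt_univ] at this
  exact this.differentiableAt

/-- slope bound at touching points -/
lemma touch_slope {u : ℝ → ℝ} {K A B x0 : ℝ} (hK : ∀ x y, |u y - u x| ≤ K * |y - x|)
    (hm : IsLocalMax (fun x => u x - (A * x ^ 2 + B * x)) x0) : |2 * A * x0 + B| ≤ K := by
  obtain ⟨e, he, hb⟩ := Metric.eventually_nhds_iff.1 hm
  have key : ∀ h, |h| < e → -(K * |h|) ≤ (2 * A * x0 + B) * h + A * h ^ 2 := by
    intro h hh
    have h1 := hb (y := x0 + h) (by simpa [Real.dist_eq] using hh)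
    have h2 := (abs_le.1 (hK x0 (x0 + h))).1
    rw [add_sub_cancel_left] at h2
    simp only at h1
    nlinarith
  set q := 2 * A * x0 + B
  by_contra! hcon
  set d := |q| - K with hd
  have hd0 : 0 < d := by linarith
  set h := min (e / 2) (d / (2 * (|A| + 1))) with hh
  have hh0 : 0 < h := by positivity
  have hhe : h < e := lt_of_le_of_lt (min_le_left _ _) (by linarith)
  have hhA : |A| * h ≤ d / 2 := by
    have : h ≤ d / (2 * (|A| + 1)) := min_le_right _ _
    rw [le_div_iff₀ (by positivity)] at this
    nlinarith
  have hA1 : A * h ≤ |A| * h := mul_le_mul_of_nonneg_right (le_abs_self A) hh0.le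
  rcases le_total 0 q with hq | hq
  · have := key (-h) (by rwa [abs_neg, abs_of_pos hh0])
    rw [abs_neg, abs_of_pos hh0] at this
    rw [abs_of_nonneg hq] at hd
    have : h * (K - q + A * h) ≥ 0 := by nlinarith
    have := nonneg_of_mul_nonneg_right this hh0
    linarith
  · have := key h (by rwa [abs_of_pos hh0])
    rw [abs_of_pos hh0] at this
    rw [abs_of_nonpos hq] at hd
    have : h * (K + q + A * h) ≥ 0 := by nlinarith
    have := nonneg_of_mul_nonneg_right this hh0
    linarith

lemma touch_slope' {u : ℝ → ℝ} {K A B x0 : ℝ} (hK : ∀ x y, |u y - u x| ≤ K * |y - x|)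
    (hm : IsLocalMin (fun x => u x - (A * x ^ 2 + B * x)) x0) : |2 * A * x0 + B| ≤ K := by
  have := touch_slope (u := fun x => - u x) (A := -A) (B := -B) (x0 := x0) (K := K) (by
    intro x y
    have := hK x y
    rw [← abs_neg] at this
    convert this using 2; ring) (by
      have := hm.neg
      refine this.congr (Eventually.of_forall fun x => ?_)
      simp; ring)
  rw [← abs_neg]
  convert this using 2; ring

lemma touch_deriv {u : ℝ → ℝ} {A B x0 : ℝ} (hd : DifferentiableAt ℝ u x0)
    (hm : IsLocalExtr (fun x => u x - (A * x ^ 2 + B * x)) x0) : 2 * A * x0 + B = deriv u x0 := by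
  have h1 : HasDerivAt (fun x : ℝ => A * x ^ 2 + B * x) (2 * A * x0 + B) x0 := by
    have := ((hasDerivAt_pow 2 x0).const_mul A).fun_add ((hasDerivAt_id' x0).const_mul B)
    refine this.congr_deriv ?_
    norm_num; ring
  have := hm.hasDerivAt_eq_zero (hd.hasDerivAt.fun_sub h1)
  linarith

/-- Hypothesis: H is locally Lipschitz. -/
def HLip (H : ℝ → ℝ → ℝ) : Prop := ∀ R, ∃ L, 0 ≤ L ∧ (∀ x p q, |p| ≤ R → |q| ≤ R →
  |H x p - H x q| ≤ L * |p - q|) ∧ (∀ x y p, |p| ≤ R → |H x p - H y p| ≤ L * |x - y|)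

lemma ode_stage1 {a H lam u K} (hu : Continuous u) (ha : Continuous a) (hL : HLip H)
    (hsup : QSuper a H lam u) (hsub : QSub a H lam u)
    (hK : ∀ x y, |u y - u x| ≤ K * |y - x|) {x0 : ℝ} (hx0 : 0 < a x0) :
    ∃ r k, 0 < r ∧ ConvexOn ℝ (Ioo (x0 - r) (x0 + r)) (fun x => u x - (-k) / 2 * x ^ 2) ∧
      ConcaveOn ℝ (Ioo (x0 - r) (x0 + r)) (fun x => u x - k / 2 * x ^ 2) := by
  obtain ⟨L, hL0, hL1, hL2⟩ := hL (max K 0)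
  obtain ⟨r, hr, hra⟩ := Metric.eventually_nhds_iff.1
    (ha.continuousAt.eventually (lt_mem_nhds (half_lt_self hx0)))
  set C := |lam| + |H x0 0| + L * r + L * (max K 0) with hC
  have hC0 : 0 ≤ C := by positivity
  have hbd : ∀ x p, x ∈ Ioo (x0 - r) (x0 + r) → |p| ≤ K → |lam - H x p| ≤ C := by
    intro x p hx hp
    have hpK : |p| ≤ max K 0 := hp.trans (le_max_left _ _)
    have h1 := hL1 x p 0 hpK (by simp)
    have h2 := hL2 x x0 0 (by simp)
    have h3 : L * |x - x0| ≤ L * r := by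
      apply mul_le_mul_of_nonneg_left _ hL0
      rw [abs_le]; constructor <;> linarith [hx.1, hx.2]
    have h4 : L * |p - 0| ≤ L * max K 0 := by
      apply mul_le_mul_of_nonneg_left _ hL0
      simpa using hpK
    have e : lam - H x p = lam - (H x p - H x 0) - (H x 0 - H x0 0) - H x0 0 := by ring
    rw [e]
    calc _ ≤ |lam - (H x p - H x 0) - (H x 0 - H x0 0)| + |H x0 0| := abs_sub _ _
      _ ≤ |lam - (H x p - H x 0)| + |(H x 0 - H x0 0)| + |H x0 0| := by
        gcongr; exact abs_sub _ _
      _ ≤ |lam| + |(H x p - H x 0)| + |(H x 0 - H x0 0)| + |H x0 0| := by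
        gcongr; exact abs_sub _ _
      _ ≤ C := by linarith
  have hax : ∀ x ∈ Ioo (x0 - r) (x0 + r), a x0 / 2 < a x := by
    intro x hx
    apply hra
    rw [Real.dist_eq, abs_lt]; constructor <;> linarith [hx.1, hx.2]
  refine ⟨r, C / (a x0 / 2), hr, visc_convex hu ?_, visc_concave hu ?_⟩
  · intro A B x hx hm
    have h1 := hsub A B x hm
    have h2 := (abs_le.1 (hbd x _ hx (touch_slope hK hm))).1
    have h3 := hax x hx
    rw [← neg_div, div_le_iff₀ (by positivity)]
    by_contra! hlt
    have : A < 0 := by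
      by_contra! hA
      nlinarith
    nlinarith
  · intro A B x hx hm
    have h1 := hsup A B x hm
    have h2 := (abs_le.1 (hbd x _ hx (touch_slope' hK hm))).2
    have h3 := hax x hx
    rw [le_div_iff₀ (by positivity)]
    by_contra! hlt
    have : 0 < A := by
      by_contra! hA
      nlinarith
    nlinarith

lemma ode_diff {a H lam u K} (hu : Continuous u) (ha : Continuous a) (hL : HLip H)
    (hsup : QSuper a H lam u) (hsub : QSub a H lam u)
    (hK : ∀ x y, |u y - u x| ≤ K * |y - x|) {x0 : ℝ} (hx0 : 0 < a x0) :
    DifferentiableAt ℝ u x0 := by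
  obtain ⟨r, k, hr, h1, h2⟩ := ode_stage1 hu ha hL hsup hsub hK hx0
  exact diff_of_conv ⟨by linarith, by linarith⟩ h1 h2

lemma deriv_bound {u : ℝ → ℝ} {K : ℝ} (hK0 : 0 ≤ K) (hK : ∀ x y, |u y - u x| ≤ K * |y - x|) (x : ℝ) :
    |deriv u x| ≤ K := by
  have : LipschitzWith K.toNNReal u := by
    apply LipschitzWith.of_dist_le_mul
    intro x y
    rw [Real.dist_eq, Real.dist_eq, Real.coe_toNNReal _ hK0]
    exact hK y x
  have := norm_deriv_le_of_lipschitz (x₀ := x) this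
  rwa [Real.norm_eq_abs, Real.coe_toNNReal _ hK0] at this

lemma quad_sub_deriv {u : ℝ → ℝ} {x k : ℝ} (h : DifferentiableAt ℝ u x) :
    HasDerivAt (fun x => u x - k / 2 * x ^ 2) (deriv u x - k * x) x := by
  have := ((hasDerivAt_pow 2 x).const_mul (k / 2))
  refine (h.hasDerivAt.fun_sub this).congr_deriv ?_
  norm_num; ring

lemma ode_contDeriv {a H lam u K} (hu : Continuous u) (ha : Continuous a) (hL : HLip H)
    (hsup : QSuper a H lam u) (hsub : QSub a H lam u)
    (hK : ∀ x y, |u y - u x| ≤ K * |y - x|) {x0 : ℝ} (hx0 : 0 < a x0) :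
    ContinuousAt (deriv u) x0 := by
  obtain ⟨r, k, hr, h1, h2⟩ := ode_stage1 hu ha hL hsup hsub hK hx0
  have hd : ∀ x ∈ Ioo (x0 - r) (x0 + r), DifferentiableAt ℝ u x :=
    fun x hx => diff_of_conv hx h1 h2
  have m1 := h1.monotoneOn_deriv (fun x hx => (quad_sub_deriv (hd x hx)).differentiableAt)
  have m2 := h2.antitoneOn_deriv (fun x hx => (quad_sub_deriv (hd x hx)).differentiableAt)
  have hlip : ∀ x ∈ Ioo (x0 - r) (x0 + r), ∀ y ∈ Ioo (x0 - r) (x0 + r), x ≤ y →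
      |deriv u y - deriv u x| ≤ k * (y - x) := by
    intro x hx y hy hxy
    have e1 := m1 hx hy hxy
    have e2 := m2 hx hy hxy
    rw [(quad_sub_deriv (hd x hx)).deriv, (quad_sub_deriv (hd y hy)).deriv] at e1 e2
    rw [abs_le]; constructor <;> linarith
  have hx0m : x0 ∈ Ioo (x0 - r) (x0 + r) := ⟨by linarith, by linarith⟩
  rw [ContinuousAt, tendsto_iff_dist_tendsto_zero]
  have t0 : Tendsto (fun x => |k| * |x - x0|) (𝓝 x0) (𝓝 0) := by
    have : Continuous (fun x => |k| * |x - x0|) := by fun_prop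
    simpa using this.tendsto x0
  refine squeeze_zero' (Eventually.of_forall fun _ => dist_nonneg) ?_ t0
  filter_upwards [Ioo_mem_nhds hx0m.1 hx0m.2] with x hx
  rw [Real.dist_eq]
  rcases le_total x x0 with hh | hh
  · have := hlip x hx x0 hx0m hh
    rw [abs_sub_comm]
    refine this.trans ?_
    rw [abs_of_nonpos (by linarith : x - x0 ≤ 0)]
    nlinarith [le_abs_self k]
  · have := hlip x0 hx0m x hx hh
    refine this.trans ?_
    rw [abs_of_nonneg (by linarith : 0 ≤ x - x0)]
    nlinarith [le_abs_self k]

lemma ode_main {a H lam u K} (hu : Continuous u) (ha : Continuous a) (hL : HLip H)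
    (hK0 : 0 ≤ K)
    (hsup : QSuper a H lam u) (hsub : QSub a H lam u)
    (hK : ∀ x y, |u y - u x| ≤ K * |y - x|) {x0 : ℝ} (hx0 : 0 < a x0) :
    HasDerivAt (deriv u) ((lam - H x0 (deriv u x0)) / a x0) x0 := by
  set c := (lam - H x0 (deriv u x0)) / a x0 with hc
  -- continuity of F
  have hF : ContinuousAt (fun x => (lam - H x (deriv u x)) / a x) x0 := by
    refine ContinuousAt.div (continuousAt_const.sub ?_) ha.continuousAt hx0.ne'
    have hcd := ode_contDeriv hu ha hL hsup hsub hK hx0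
    obtain ⟨L, hL0, hL1, hL2⟩ := hL K
    rw [ContinuousAt, tendsto_iff_dist_tendsto_zero]
    have t0 : Tendsto (fun x => L * |deriv u x - deriv u x0| + L * |x - x0|) (𝓝 x0) (𝓝 0) := by
      have : ContinuousAt (fun x => L * |deriv u x - deriv u x0| + L * |x - x0|) x0 := by fun_prop
      simpa using this.tendsto
    refine squeeze_zero (fun _ => dist_nonneg) (fun x => ?_) t0
    rw [Real.dist_eq]
    have h1 := hL1 x (deriv u x) (deriv u x0) (deriv_bound hK0 hK x) (deriv_bound hK0 hK x0)
    have h2 := hL2 x x0 (deriv u x0) (deriv_bound hK0 hK x0)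
    exact (abs_sub_le _ (H x (deriv u x0)) _).trans (add_le_add h1 h2)
  rw [hasDerivAt_iff_isLittleO, Asymptotics.isLittleO_iff]
  intro e he
  have ev1 := hF.eventually (Ioo_mem_nhds (sub_lt_self c he) (lt_add_of_pos_right c he))
  have ev2 := ha.continuousAt.eventually (lt_mem_nhds hx0)
  obtain ⟨r, hr, hb⟩ := Metric.eventually_nhds_iff.1 (ev1.and ev2)
  have hb' : ∀ x ∈ Ioo (x0 - r) (x0 + r), (c - e < (lam - H x (deriv u x)) / a x ∧
      (lam - H x (deriv u x)) / a x < c + e) ∧ 0 < a x := by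
    intro x hx
    exact hb (by rw [Real.dist_eq, abs_lt]; constructor <;> linarith [hx.1, hx.2])
  have hd : ∀ x ∈ Ioo (x0 - r) (x0 + r), DifferentiableAt ℝ u x :=
    fun x hx => ode_diff hu ha hL hsup hsub hK (hb' x hx).2
  have h1 : ConvexOn ℝ (Ioo (x0 - r) (x0 + r)) (fun x => u x - (c - e) / 2 * x ^ 2) := by
    apply visc_convex hu
    intro A B x hx hm
    have g := hsub A B x hm
    rw [touch_deriv (hd x hx) hm.isExtr] at g
    have g2 := hb' x hx
    refine g2.1.1.le.trans ?_
    rw [div_le_iff₀ g2.2]; linarith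
  have h2 : ConcaveOn ℝ (Ioo (x0 - r) (x0 + r)) (fun x => u x - (c + e) / 2 * x ^ 2) := by
    apply visc_concave hu
    intro A B x hx hm
    have g := hsup A B x hm
    rw [touch_deriv (hd x hx) hm.isExtr] at g
    have g2 := hb' x hx
    refine le_trans ?_ g2.1.2.le
    rw [le_div_iff₀ g2.2]; linarith
  have m1 := h1.monotoneOn_deriv (fun x hx => (quad_sub_deriv (hd x hx)).differentiableAt)
  have m2 := h2.antitoneOn_deriv (fun x hx => (quad_sub_deriv (hd x hx)).differentiableAt)
  have hx0m : x0 ∈ Ioo (x0 - r) (x0 + r) := ⟨by linarith, by linarith⟩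
  filter_upwards [Ioo_mem_nhds hx0m.1 hx0m.2] with x hx
  rw [Real.norm_eq_abs, Real.norm_eq_abs, smul_eq_mul]
  rcases le_total x x0 with hh | hh
  · have e1 := m1 hx hx0m hh
    have e2 := m2 hx hx0m hh
    rw [(quad_sub_deriv (hd x hx)).deriv, (quad_sub_deriv (hd x0 hx0m)).deriv] at e1 e2
    rw [abs_of_nonpos (by linarith : x - x0 ≤ 0), abs_le]
    constructor <;> linarith
  · have e1 := m1 hx0m hx hh
    have e2 := m2 hx0m hx hh
    rw [(quad_sub_deriv (hd x hx)).deriv, (quad_sub_deriv (hd x0 hx0m)).deriv] at e1 e2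
    rw [abs_of_nonneg (by linarith : 0 ≤ x - x0), abs_le]
    constructor <;> linarith

lemma zpt_sub {a H lam u} {κ y p : ℝ} (hu : Continuous u) (hL : HLip H)
    (ha0 : ∀ x, 0 ≤ a x) (hay : ∀ x, a x ≤ κ ^ 2 * (x - y) ^ 2)
    (hsub : QSub a H lam u) (hd : HasDerivAt u p y) : lam ≤ H y p := by
  obtain ⟨L, hL0, hL1, hL2⟩ := hL (|p| + 2)
  have key : ∀ δ, 0 < δ → δ < 1 → lam ≤ H y p + (2 * κ ^ 2 + 3 * L) * δ := by
    intro δ hδ hδ1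
    rw [hasDerivAt_iff_isLittleO, Asymptotics.isLittleO_iff] at hd
    obtain ⟨r0, hr0, hb⟩ := Metric.eventually_nhds_iff.1 (hd (half_pos hδ))
    set r := min (r0 / 2) δ with hr
    have hrp : 0 < r := by positivity
    have hrr : r < r0 := lt_of_le_of_lt (min_le_left _ _) (by linarith)
    have hrd : r ≤ δ := min_le_right _ _
    set A := δ / r with hA
    have hAr : A * r = δ := by rw [hA]; field_simp
    have hA0 : 0 < A := by positivity
    set φ : ℝ → ℝ := fun w => u w - (A * w ^ 2 + (p - 2 * A * y) * w) with hφ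
    have hφc : Continuous φ := by fun_prop
    have hend : ∀ w, |w - y| = r → φ w < φ y := by
      intro w hw
      have h1 := hb (y := w) (by rw [Real.dist_eq, hw]; exact hrr)
      rw [Real.norm_eq_abs, Real.norm_eq_abs, smul_eq_mul, hw] at h1
      have h2 := (abs_le.1 h1).2
      have h3 : (w - y) ^ 2 = r ^ 2 := by rw [← hw, sq_abs]
      have h4 : φ w - φ y = (u w - u y - (w - y) * p) - A * (w - y) ^ 2 := by
        simp only [hφ]; ring
      have h5 : A * r ^ 2 = δ * r := by rw [← hAr]; ring
      rw [h3, h5] at h4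
      have : 0 < δ * r := by positivity
      linarith
    obtain ⟨m, hm, hmax⟩ := isCompact_Icc.exists_isMaxOn
      (nonempty_Icc.2 (by linarith : y - r ≤ y + r)) hφc.continuousOn
    have hmy := hmax (show y ∈ Icc (y - r) (y + r) from ⟨by linarith, by linarith⟩)
    simp only [mem_ofPred_eq] at hmy
    have hm1 : m ≠ y - r := by
      intro h
      have := hend m (by rw [h]; simp [abs_of_pos hrp])
      linarith
    have hm2 : m ≠ y + r := by
      intro h
      have := hend m (by rw [h]; simp [abs_of_pos hrp])
      linarith
    have m1 : y - r < m := lt_of_le_of_ne hm.1 (Ne.symm hm1)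
    have m2 : m < y + r := lt_of_le_of_ne hm.2 hm2
    have h := hsub A (p - 2 * A * y) m (hmax.isLocalMax (Icc_mem_nhds m1 m2))
    have e : 2 * A * m + (p - 2 * A * y) = p + 2 * A * (m - y) := by ring
    rw [e] at h
    have hmr : |m - y| ≤ r := by rw [abs_le]; constructor <;> linarith
    have hq : |2 * A * (m - y)| ≤ 2 * δ := by
      rw [abs_mul, abs_of_pos (by positivity : 0 < 2 * A), ← hAr]
      nlinarith
    have hqp : |p + 2 * A * (m - y)| ≤ |p| + 2 := (abs_add_le _ _).trans (by linarith)
    have g1 := hL1 m (p + 2 * A * (m - y)) p hqp (by linarith)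
    rw [add_sub_cancel_left] at g1
    have g2 := hL2 m y p (by linarith)
    have g1' := (abs_le.1 g1).2
    have g2' := (abs_le.1 g2).2
    have g3 : L * |2 * A * (m - y)| ≤ L * (2 * δ) := mul_le_mul_of_nonneg_left hq hL0
    have g4 : L * |m - y| ≤ L * δ := mul_le_mul_of_nonneg_left (hmr.trans hrd) hL0
    have g5 : a m * (2 * A) ≤ 2 * κ ^ 2 * δ := by
      have h6 : (m - y) ^ 2 ≤ r ^ 2 := by
        rw [← sq_abs]; exact pow_le_pow_left₀ (abs_nonneg _) hmr 2
      have h7 : a m ≤ κ ^ 2 * r ^ 2 :=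
        (hay m).trans (mul_le_mul_of_nonneg_left h6 (sq_nonneg _))
      calc a m * (2 * A) ≤ κ ^ 2 * r ^ 2 * (2 * A) := mul_le_mul_of_nonneg_right h7 (by positivity)
        _ = 2 * κ ^ 2 * r * (A * r) := by ring
        _ = 2 * κ ^ 2 * δ * r := by rw [hAr]; ring
        _ ≤ 2 * κ ^ 2 * δ * 1 := mul_le_mul_of_nonneg_left (by linarith) (by positivity)
        _ = _ := by ring
    linarith
  have t : Tendsto (fun δ => H y p + (2 * κ ^ 2 + 3 * L) * δ) (𝓝[>] 0) (𝓝 (H y p)) := by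
    have : Continuous (fun δ => H y p + (2 * κ ^ 2 + 3 * L) * δ) := by fun_prop
    have := this.tendsto 0
    simp only [mul_zero, add_zero] at this
    exact this.mono_left nhdsWithin_le_nhds
  refine ge_of_tendsto t ?_
  filter_upwards [Ioo_mem_nhdsGT (zero_lt_one' ℝ)] with δ hδ
  exact key δ hδ.1 hδ.2

lemma HLip.neg {H} (h : HLip H) : HLip (fun x p => - H x (-p)) := by
  intro R
  obtain ⟨L, hL0, hL1, hL2⟩ := h R
  refine ⟨L, hL0, ?_, ?_⟩
  · intro x p q hp hq
    have := hL1 x (-q) (-p) (by rwa [abs_neg]) (by rwa [abs_neg])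
    convert this using 2
    · ring
    · congr 1; ring
  · intro x y p hp
    have := hL2 y x (-p) (by rwa [abs_neg])
    rw [abs_sub_comm x y]
    convert this using 2
    ring

lemma HLip.refl {H} (h : HLip H) : HLip (fun x p => H (-x) (-p)) := by
  intro R
  obtain ⟨L, hL0, hL1, hL2⟩ := h R
  refine ⟨L, hL0, ?_, ?_⟩
  · intro x p q hp hq
    have := hL1 (-x) (-p) (-q) (by rwa [abs_neg]) (by rwa [abs_neg])
    rw [abs_sub_comm p q]
    convert this using 2
    congr 1; ring
  · intro x y p hp
    have := hL2 (-x) (-y) (-p) (by rwa [abs_neg])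
    rw [abs_sub_comm x y]
    convert this using 2
    congr 1; ring

lemma zpt_eq {a H lam u} {κ y p : ℝ} (hu : Continuous u) (hL : HLip H)
    (ha0 : ∀ x, 0 ≤ a x) (hay : ∀ x, a x ≤ κ ^ 2 * (x - y) ^ 2)
    (hsub : QSub a H lam u) (hsup : QSuper a H lam u) (hd : HasDerivAt u p y) : H y p = lam := by
  have h1 := zpt_sub hu hL ha0 hay hsub hd
  have h2 := zpt_sub (u := fun x => - u x) (by fun_prop) hL.neg ha0 hay hsup.neg hd.fun_neg
  simp only [neg_neg] at h2
  linarith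

/-- blow-up lemma -/
lemma blowup {a f f' : ℝ → ℝ} {κ l x0 K δ : ℝ} (hκ : 0 < κ) (hlx : l < x0)
    (hapos : ∀ x, l < x → x ≤ x0 → 0 < a x) (hal : ∀ x, a x ≤ κ ^ 2 * (x - l) ^ 2)
    (hf : ∀ x, l < x → x ≤ x0 → HasDerivAt f (f' x) x)
    (hδ : 0 < δ) (hf' : ∀ x, l < x → x ≤ x0 → δ ≤ a x * f' x)
    (hK : ∀ x, l < x → x ≤ x0 → -K ≤ f x) : False := by
  set g : ℝ → ℝ := fun x => f x + δ / κ ^ 2 * (x - l)⁻¹ with hg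
  have hgd : ∀ x, l < x → x ≤ x0 → HasDerivAt g (f' x + δ / κ ^ 2 * (-1 / (x - l) ^ 2)) x := by
    intro x h1 h2
    refine (hf x h1 h2).fun_add (HasDerivAt.const_mul _ ?_)
    exact ((hasDerivAt_id' x).sub_const l).fun_inv (by linarith)
  have hpos : ∀ x, l < x → x ≤ x0 → 0 ≤ f' x + δ / κ ^ 2 * (-1 / (x - l) ^ 2) := by
    intro x h1 h2
    have hx : 0 < (x - l) ^ 2 := by have : 0 < x - l := by linarith
                                    positivity
    have h3 := hf' x h1 h2
    have h4 := hapos x h1 h2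
    have h5 := hal x
    have hf0 : 0 < f' x := by
      by_contra! hc
      nlinarith
    have : δ ≤ κ ^ 2 * (x - l) ^ 2 * f' x := h3.trans (mul_le_mul_of_nonneg_right h5 hf0.le)
    have : δ / κ ^ 2 * (-1 / (x - l) ^ 2) = - (δ / (κ ^ 2 * (x - l) ^ 2)) := by
      field_simp
    rw [this]
    have : δ / (κ ^ 2 * (x - l) ^ 2) ≤ f' x := by
      rw [div_le_iff₀ (by positivity)]; linarith
    linarith
  have hmono : MonotoneOn g (Ioc l x0) := by
    apply monotoneOn_of_deriv_nonneg (convex_Ioc l x0)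
    · intro x hx
      exact (hgd x hx.1 hx.2).continuousAt.continuousWithinAt
    · intro x hx
      rw [interior_Ioc] at hx
      exact (hgd x hx.1 hx.2.le).differentiableAt.differentiableWithinAt
    · intro x hx
      rw [interior_Ioc] at hx
      rw [(hgd x hx.1 hx.2.le).deriv]
      exact hpos x hx.1 hx.2.le
  -- choose x close to l
  set c := δ / κ ^ 2 with hc
  have hc0 : 0 < c := by positivity
  set G := |g x0| + |K| + 1 with hG
  have hG0 : 0 < G := by positivity
  set h := min (x0 - l) (c / G) with hh
  have hh0 : 0 < h := lt_min (by linarith) (by positivity)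
  have h1 : h ≤ x0 - l := min_le_left _ _
  have h2 : h ≤ c / G := min_le_right _ _
  have h3 := hmono (show l + h ∈ Ioc l x0 from ⟨by linarith, by linarith⟩)
    (show x0 ∈ Ioc l x0 from ⟨hlx, le_rfl⟩) (by linarith)
  have h4 := hK (l + h) (by linarith) (by linarith)
  have h5 : g (l + h) = f (l + h) + c * h⁻¹ := by simp [hg]
  have h6 : G ≤ c * h⁻¹ := by
    rw [← div_eq_mul_inv, le_div_iff₀ hh0]
    rw [le_div_iff₀ hG0] at h2
    linarith
  linarith [le_abs_self (g x0), le_abs_self K]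

/-- one-sided crossing: if f stays away from crossing downward backward -/
lemma crossing {f f' : ℝ → ℝ} {l x0 q : ℝ}
    (hf : ∀ x, l < x → x ≤ x0 → HasDerivAt f (f' x) x)
    (hc : ∀ x, l < x → x ≤ x0 → f x = q → 0 < f' x) (h0 : f x0 < q) :
    ∀ x, l < x → x ≤ x0 → f x < q := by
  intro x hx hxx
  by_contra! hge
  have hcont : ContinuousOn f (Icc x x0) := fun y hy =>
    (hf y (by linarith [hy.1]) hy.2).continuousAt.continuousWithinAt
  -- last point where f ≥ q
  have hcl : IsCompact (Icc x x0 ∩ f ⁻¹' Ici q) :=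
    isCompact_Icc.of_isClosed_subset (hcont.preimage_isClosed_of_isClosed isClosed_Icc isClosed_Ici)
      inter_subset_left
  obtain ⟨m, hm, hmax⟩ := hcl.exists_isGreatest ⟨x, ⟨le_rfl, hxx⟩, hge⟩
  have hmq : q ≤ f m := hm.2
  have hmx0 : m < x0 := lt_of_le_of_ne hm.1.2 (by rintro rfl; linarith)
  have hlm : l < m := by linarith [hm.1.1]
  have hafter : ∀ y, m < y → y ≤ x0 → f y < q := by
    intro y h1 h2
    by_contra! h3
    have := hmax ⟨⟨by linarith [hm.1.1], h2⟩, h3⟩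
    linarith
  have hd := hf m hlm hmx0.le
  have hfm : f m = q := by
    refine le_antisymm ?_ hmq
    have : Tendsto f (𝓝[>] m) (𝓝 (f m)) := hd.continuousAt.tendsto.mono_left nhdsWithin_le_nhds
    refine le_of_tendsto this ?_
    filter_upwards [Ioo_mem_nhdsGT hmx0] with y hy
    exact (hafter y hy.1 hy.2.le).le
  have hp := hc m hlm hmx0.le hfm
  have hs := hd.hasDerivWithinAt (s := Ioi m)
  rw [hasDerivWithinAt_iff_tendsto_slope' self_notMem_Ioi] at hs
  have : f' m ≤ 0 := by
    refine le_of_tendsto hs ?_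
    filter_upwards [Ioo_mem_nhdsGT hmx0] with y hy
    rw [slope_def_field]
    apply div_nonpos_of_nonpos_of_nonneg
    · linarith [hafter y hy.1 hy.2.le]
    · linarith [hy.1]
  linarith

def OSol (a : ℝ → ℝ) (H : ℝ → ℝ → ℝ) (lam K l x0 : ℝ) (w : ℝ → ℝ) : Prop :=
  ∀ x, l < x → x ≤ x0 → HasDerivAt w ((lam - H x (w x)) / a x) x ∧ |w x| ≤ K

lemma OSol.mono {a H lam K l x0 x1 w} (h : OSol a H lam K l x0 w) (hx : x1 ≤ x0) :
    OSol a H lam K l x1 w := fun x h1 h2 => h x h1 (h2.trans hx)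

lemma edge_min {a : ℝ → ℝ} {H : ℝ → ℝ → ℝ} {phat z : ℝ → ℝ} {lam0 lam κ K l x0 : ℝ}
    (hL : HLip H) (hmin : ∀ x p, H x (phat x) ≤ H x p)
    (hκ : 0 < κ) (hlx : l < x0)
    (hapos : ∀ x, l < x → x ≤ x0 → 0 < a x) (hal : ∀ x, a x ≤ κ ^ 2 * (x - l) ^ 2)
    (hlam : lam0 < lam) (hz : OSol a H lam0 K l x0 z) : H l (phat l) < lam := by
  by_contra! hcon
  obtain ⟨L, hL0, hL1, hL2⟩ := hL K
  set r := (lam - lam0) / (2 * (L + 1)) with hr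
  have hr0 : 0 < r := div_pos (by linarith) (by positivity)
  have hrL : L * r ≤ (lam - lam0) / 2 := by
    have : r * (2 * (L + 1)) = lam - lam0 := by rw [hr]; field_simp
    nlinarith
  have hx1 : min x0 (l + r) ≤ x0 := min_le_left _ _
  have hx2 : min x0 (l + r) ≤ l + r := min_le_right _ _
  refine blowup (a := a) (f := fun x => - z x) (f' := fun x => -((lam0 - H x (z x)) / a x))
    (κ := κ) (l := l) (x0 := min x0 (l + r)) (K := K) (δ := (lam - lam0) / 2)
    hκ (lt_min hlx (by linarith)) (fun x h1 h2 => hapos x h1 (h2.trans hx1)) hal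
    (fun x h1 h2 => (hz x h1 (h2.trans hx1)).1.fun_neg) (by linarith) ?_ ?_
  · intro x h1 h2
    have ha := hapos x h1 (h2.trans hx1)
    have e : a x * -((lam0 - H x (z x)) / a x) = H x (z x) - lam0 := by field_simp; ring
    rw [e]
    have g1 := (abs_le.1 (hL2 x l (z x) (hz x h1 (h2.trans hx1)).2)).1
    rw [abs_of_pos (by linarith : 0 < x - l)] at g1
    have g2 := hmin l (z x)
    have g3 : L * (x - l) ≤ L * r := mul_le_mul_of_nonneg_left (by linarith) hL0
    linarith
  · intro x h1 h2
    have := (abs_le.1 (hz x h1 (h2.trans hx1)).2).2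
    linarith

lemma edge_branch {a : ℝ → ℝ} {H : ℝ → ℝ → ℝ} {phat w z : ℝ → ℝ} {lam0 lam κ K l x0 η q : ℝ}
    (hL : HLip H) (hmin : ∀ x p, H x (phat x) ≤ H x p) (hη : 0 < η)
    (hdec : ∀ x p1 p2 : ℝ, p1 < p2 → p2 ≤ phat x → η * |p1 - p2| ≤ H x p1 - H x p2)
    (hinc : ∀ x p1 p2 : ℝ, phat x ≤ p1 → p1 < p2 → η * |p1 - p2| ≤ H x p2 - H x p1)
    (hκ : 0 < κ)
    (hapos : ∀ x, l < x → x ≤ x0 → 0 < a x) (hal : ∀ x, a x ≤ κ ^ 2 * (x - l) ^ 2)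
    (hlam : lam0 < lam) (hz : OSol a H lam0 K l x0 z) (hw : OSol a H lam K l x0 w)
    (hzw : ∀ x, l < x → x ≤ x0 → z x ≤ w x)
    (hq2 : H l q < lam) (hq3 : H l q - H l (phat l) ≤ (lam - lam0) / 3) :
    ∃ r > 0, ∀ x, l < x → x ≤ l + r → x ≤ x0 → q ≤ w x := by
  obtain ⟨L, hL0, hL1, hL2⟩ := hL (max K |q|)
  set r := min ((lam - lam0) / (6 * (L + 1))) ((lam - H l q) / (2 * (L + 1))) with hr
  have hr0 : 0 < r := lt_min (div_pos (by linarith) (by positivity))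
    (div_pos (by linarith) (by positivity))
  have hr1 : L * r ≤ (lam - lam0) / 6 := by
    have : r ≤ (lam - lam0) / (6 * (L + 1)) := min_le_left _ _
    rw [le_div_iff₀ (by positivity)] at this
    nlinarith
  have hr2 : L * r ≤ (lam - H l q) / 2 := by
    have : r ≤ (lam - H l q) / (2 * (L + 1)) := min_le_right _ _
    rw [le_div_iff₀ (by positivity)] at this
    nlinarith
  refine ⟨r, hr0, ?_⟩
  intro x1 hlx hxr hx10
  by_contra! hlt
  have herr : ∀ x p, l < x → x ≤ x1 → |p| ≤ max K |q| → |H x p - H l p| ≤ L * r := by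
    intro x p h1 h2 hp
    refine (hL2 x l p hp).trans (mul_le_mul_of_nonneg_left ?_ hL0)
    rw [abs_of_pos (by linarith)]; linarith
  have hbelow := crossing (f := w) (q := q) (l := l) (x0 := x1)
    (f' := fun x => (lam - H x (w x)) / a x) (fun x h1 h2 => (hw x h1 (h2.trans hx10)).1) (by
      intro x h1 h2 he
      apply div_pos _ (hapos x h1 (h2.trans hx10))
      rw [he]
      have := (abs_le.1 (herr x q h1 h2 (le_max_right _ _))).2
      linarith) hlt
  refine blowup (a := a) (f := fun x => w x - z x)
    (f' := fun x => (lam - H x (w x)) / a x - (lam0 - H x (z x)) / a x)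
    (κ := κ) (l := l) (x0 := x1) (K := 0) (δ := (lam - lam0) / 3)
    hκ hlx (fun x h1 h2 => hapos x h1 (h2.trans hx10)) hal
    (fun x h1 h2 => (hw x h1 (h2.trans hx10)).1.fun_sub (hz x h1 (h2.trans hx10)).1)
    (by linarith) ?_ ?_
  · intro x h1 h2
    have h3 := h2.trans hx10
    have ha := hapos x h1 h3
    have e : a x * ((lam - H x (w x)) / a x - (lam0 - H x (z x)) / a x)
        = lam - lam0 - (H x (w x) - H x (z x)) := by field_simp; ring
    rw [e]
    have g1 := (abs_le.1 (herr x (w x) h1 h2 ((hw x h1 h3).2.trans (le_max_left _ _)))).2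
    have g2 := (abs_le.1 (herr x (z x) h1 h2 ((hz x h1 h3).2.trans (le_max_left _ _)))).1
    have hwq := hbelow x h1 h2
    have hzw' := hzw x h1 h3
    have g3 : H l (w x) - H l (z x) ≤ (lam - lam0) / 3 := by
      rcases le_or_gt (w x) (phat l) with hp | hp
      · rcases hzw'.eq_or_lt with he | he
        · rw [he]; linarith
        · have := hdec l (z x) (w x) he hp
          have : 0 ≤ η * |z x - w x| := by positivity
          linarith
      · have g4 := hinc l (w x) q hp.le hwq
        have : 0 ≤ η * |w x - q| := by positivity
        have := hmin l (z x)
        linarith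
    linarith
  · intro x h1 h2
    have := hzw x h1 (h2.trans hx10)
    linarith

lemma edge_eq {a : ℝ → ℝ} {H : ℝ → ℝ → ℝ} {phat w1 w2 : ℝ → ℝ} {lam κ K l x0 η q : ℝ}
    (hη : 0 < η)
    (hinc : ∀ x p1 p2 : ℝ, phat x ≤ p1 → p1 < p2 → η * |p1 - p2| ≤ H x p2 - H x p1)
    (hκ : 0 < κ) (hlx : l < x0)
    (hapos : ∀ x, l < x → x ≤ x0 → 0 < a x) (hal : ∀ x, a x ≤ κ ^ 2 * (x - l) ^ 2)
    (hw1 : OSol a H lam K l x0 w1) (hw2 : OSol a H lam K l x0 w2)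
    (hp : ∀ x, l < x → x ≤ x0 → phat x ≤ q)
    (hq2 : ∀ x, l < x → x ≤ x0 → q ≤ w2 x) : w1 x0 ≤ w2 x0 := by
  by_contra! hlt
  set d := w1 x0 - w2 x0 with hd
  have hd0 : 0 < d := by linarith
  have hH : ∀ x, l < x → x ≤ x0 → d / 2 ≤ w1 x - w2 x → η * (d / 2) ≤ H x (w1 x) - H x (w2 x) := by
    intro x h1 h2 h3
    have := hinc x (w2 x) (w1 x) ((hp x h1 h2).trans (hq2 x h1 h2)) (by linarith)
    rw [abs_sub_comm, abs_of_pos (by linarith)] at this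
    refine le_trans ?_ this
    exact mul_le_mul_of_nonneg_left h3 hη.le
  have hder : ∀ x, l < x → x ≤ x0 → HasDerivAt (fun x => w2 x - w1 x)
      ((lam - H x (w2 x)) / a x - (lam - H x (w1 x)) / a x) x :=
    fun x h1 h2 => (hw2 x h1 h2).1.fun_sub (hw1 x h1 h2).1
  have he : ∀ x, l < x → x ≤ x0 → a x * ((lam - H x (w2 x)) / a x - (lam - H x (w1 x)) / a x)
      = H x (w1 x) - H x (w2 x) := by
    intro x h1 h2
    have := hapos x h1 h2
    field_simp; ring
  have hbelow := crossing (q := -(d / 2)) hder (by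
      intro x h1 h2 h3
      have h4 := hH x h1 h2 (by linarith)
      rw [← he x h1 h2] at h4
      have : 0 < η * (d / 2) := by positivity
      exact pos_of_mul_pos_right (lt_of_lt_of_le this h4) (hapos x h1 h2).le) (by linarith)
  refine blowup (K := 2 * K) (δ := η * (d / 2)) hκ hlx hapos hal hder (by positivity) ?_ ?_
  · intro x h1 h2
    rw [he x h1 h2]
    exact hH x h1 h2 (by have := hbelow x h1 h2; linarith)
  · intro x h1 h2
    have g1 := (abs_le.1 (hw1 x h1 h2).2).2
    have g2 := (abs_le.1 (hw2 x h1 h2).2).1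
    linarith

lemma edge_phat {H : ℝ → ℝ → ℝ} {phat : ℝ → ℝ} {l η q : ℝ}
    (hL : HLip H) (hη : 0 < η)
    (hdec : ∀ x p1 p2 : ℝ, p1 < p2 → p2 ≤ phat x → η * |p1 - p2| ≤ H x p1 - H x p2)
    (hinc : ∀ x p1 p2 : ℝ, phat x ≤ p1 → p1 < p2 → η * |p1 - p2| ≤ H x p2 - H x p1)
    (hq : phat l < q) : ∃ r > 0, ∀ x, l < x → x ≤ l + r → phat x ≤ q := by
  obtain ⟨L, hL0, hL1, hL2⟩ := hL (max |phat l| |q|)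
  set ρ := η * (q - phat l) with hρ
  have hρ0 : 0 < ρ := mul_pos hη (by linarith)
  set r := ρ / (2 * (L + 1)) with hr
  have hr0 : 0 < r := by positivity
  have hrL : L * r < ρ := by
    have : r * (2 * (L + 1)) = ρ := by rw [hr]; field_simp
    nlinarith
  refine ⟨r, hr0, ?_⟩
  intro x h1 h2
  by_contra! hc
  have g1 := hdec x (phat l) q hq hc.le
  have g2 := hinc l (phat l) q le_rfl hq
  rw [abs_sub_comm, abs_of_pos (by linarith : 0 < q - phat l)] at g1 g2
  have g3 := (abs_le.1 (hL2 x l (phat l) (le_max_left _ _))).2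
  have g4 := (abs_le.1 (hL2 x l q (le_max_right _ _))).1
  rw [abs_of_pos (by linarith : 0 < x - l)] at g3 g4
  have : L * (x - l) ≤ L * r := mul_le_mul_of_nonneg_left (by linarith) hL0
  linarith

lemma ode_uniq {a : ℝ → ℝ} {H : ℝ → ℝ → ℝ} {w1 w2 : ℝ → ℝ} {lam K l x1 x0 : ℝ}
    (hac : Continuous a) (hL : HLip H) (hlx : l < x1) (hx : x1 ≤ x0)
    (hapos : ∀ x, l < x → x ≤ x0 → 0 < a x)
    (hw1 : OSol a H lam K l x0 w1) (hw2 : OSol a H lam K l x0 w2)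
    (h : w1 x1 = w2 x1) : w1 x0 = w2 x0 := by
  obtain ⟨L, hL0, hL1, hL2⟩ := hL K
  obtain ⟨m, hm, hmin⟩ := isCompact_Icc.exists_isMinOn (nonempty_Icc.2 hx) hac.continuousOn
  have ham : 0 < a m := hapos m (by linarith [hm.1]) hm.2
  have hLm : 0 ≤ L / a m := by positivity
  have hIco : ∀ t ∈ Ico x1 x0, l < t ∧ t ≤ x0 := fun t ht => ⟨by linarith [ht.1], ht.2.le⟩
  have := ODE_solution_unique_of_mem_Icc_right (v := fun t p => (lam - H t p) / a t)
    (s := fun _ => {p | |p| ≤ K}) (K := (L / a m).toNNReal) (f := w1) (g := w2) (a := x1) (b := x0)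
    (by
      intro t ht
      apply LipschitzOnWith.of_dist_le_mul
      intro p hp q hq
      rw [Real.dist_eq, Real.dist_eq, Real.coe_toNNReal _ hLm]
      have h1 := hL1 t p q hp hq
      have hat := hapos t (hIco t ht).1 (hIco t ht).2
      have h2 : a m ≤ a t := hmin ⟨ht.1, ht.2.le⟩
      have e : (lam - H t p) / a t - (lam - H t q) / a t = -(H t p - H t q) / a t := by
        field_simp; ring
      rw [e, abs_div, abs_neg, abs_of_pos hat, div_le_iff₀ hat]
      calc _ ≤ L * |p - q| := h1
        _ = L / a m * |p - q| * a m := by field_simp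
        _ ≤ _ := mul_le_mul_of_nonneg_left h2 (by positivity))
    (fun t ht => (hw1 t (by linarith [ht.1]) ht.2).1.continuousAt.continuousWithinAt)
    (fun t ht => (hw1 t (hIco t ht).1 (hIco t ht).2).1.hasDerivWithinAt)
    (fun t ht => (hw1 t (hIco t ht).1 (hIco t ht).2).2)
    (fun t ht => (hw2 t (by linarith [ht.1]) ht.2).1.continuousAt.continuousWithinAt)
    (fun t ht => (hw2 t (hIco t ht).1 (hIco t ht).2).1.hasDerivWithinAt)
    (fun t ht => (hw2 t (hIco t ht).1 (hIco t ht).2).2) h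
  exact this ⟨hx, le_rfl⟩

lemma comp_eq {a : ℝ → ℝ} {H : ℝ → ℝ → ℝ} {phat w1 w2 z1 z2 : ℝ → ℝ} {lam0 lam κ K l x0 η : ℝ}
    (hac : Continuous a)
    (hL : HLip H) (hmin : ∀ x p, H x (phat x) ≤ H x p) (hη : 0 < η)
    (hdec : ∀ x p1 p2 : ℝ, p1 < p2 → p2 ≤ phat x → η * |p1 - p2| ≤ H x p1 - H x p2)
    (hinc : ∀ x p1 p2 : ℝ, phat x ≤ p1 → p1 < p2 → η * |p1 - p2| ≤ H x p2 - H x p1)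
    (hκ : 0 < κ) (hlx : l < x0)
    (hapos : ∀ x, l < x → x ≤ x0 → 0 < a x) (hal : ∀ x, a x ≤ κ ^ 2 * (x - l) ^ 2)
    (hlam : lam0 < lam) (hz1 : OSol a H lam0 K l x0 z1) (hw1 : OSol a H lam K l x0 w1)
    (hz2 : OSol a H lam0 K l x0 z2) (hw2 : OSol a H lam K l x0 w2)
    (hzw1 : ∀ x, l < x → x ≤ x0 → z1 x ≤ w1 x) (hzw2 : ∀ x, l < x → x ≤ x0 → z2 x ≤ w2 x) :
    w1 x0 = w2 x0 := by
  have hm := edge_min hL hmin hκ hlx hapos hal hlam hz1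
  obtain ⟨q, hq1, hq2, hq3⟩ : ∃ q, phat l < q ∧ H l q < lam ∧
      H l q - H l (phat l) ≤ (lam - lam0) / 3 := by
    obtain ⟨L, hL0, hL1, hL2⟩ := hL (|phat l| + 1)
    set D := min ((lam - lam0) / 3) ((lam - H l (phat l)) / 2) with hD
    have hD0 : 0 < D := lt_min (by linarith) (by linarith)
    have hD1 : D ≤ (lam - lam0) / 3 := min_le_left _ _
    have hD2 : D ≤ (lam - H l (phat l)) / 2 := min_le_right _ _
    set e := min 1 (D / (L + 1)) with he
    have he0 : 0 < e := lt_min one_pos (by positivity)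
    have he1 : e ≤ 1 := min_le_left _ _
    have he2 : L * e ≤ D := by
      have : e ≤ D / (L + 1) := min_le_right _ _
      rw [le_div_iff₀ (by positivity)] at this
      nlinarith
    have h1 := hL1 l (phat l + e) (phat l) ((abs_add_le _ _).trans (by
      rw [abs_of_pos he0]; linarith)) (by linarith)
    rw [add_sub_cancel_left, abs_of_pos he0] at h1
    have h2 := (abs_le.1 h1).2
    exact ⟨phat l + e, by linarith, by linarith, by linarith⟩
  obtain ⟨r1, hr1, hb1⟩ := edge_branch hL hmin hη hdec hinc hκ hapos hal hlam hz1 hw1 hzw1 hq2 hq3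
  obtain ⟨r2, hr2, hb2⟩ := edge_branch hL hmin hη hdec hinc hκ hapos hal hlam hz2 hw2 hzw2 hq2 hq3
  obtain ⟨r3, hr3, hb3⟩ := edge_phat hL hη hdec hinc hq1
  set x1 := min x0 (l + min r1 (min r2 r3)) with hx1
  have e0 : x1 ≤ x0 := min_le_left _ _
  have e : x1 ≤ l + min r1 (min r2 r3) := min_le_right _ _
  have f1 : min r1 (min r2 r3) ≤ r1 := min_le_left _ _
  have f2 : min r1 (min r2 r3) ≤ r2 := (min_le_right _ _).trans (min_le_left _ _)
  have f3 : min r1 (min r2 r3) ≤ r3 := (min_le_right _ _).trans (min_le_right _ _)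
  have hlx1 : l < x1 := lt_min hlx (by
    have : 0 < min r1 (min r2 r3) := by positivity
    linarith)
  have hapos1 : ∀ x, l < x → x ≤ x1 → 0 < a x := fun x h1 h2 => hapos x h1 (h2.trans e0)
  have hp : ∀ x, l < x → x ≤ x1 → phat x ≤ q := fun x h1 h2 => hb3 x h1 (by linarith)
  have i1 := edge_eq hη hinc hκ hlx1 hapos1 hal (hw1.mono e0) (hw2.mono e0) hp
    (fun x h1 h2 => hb2 x h1 (by linarith) (h2.trans e0))
  have i2 := edge_eq hη hinc hκ hlx1 hapos1 hal (hw2.mono e0) (hw1.mono e0) hp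
    (fun x h1 h2 => hb1 x h1 (by linarith) (h2.trans e0))
  exact ode_uniq hac hL hlx1 e0 hapos hw1 hw2 (le_antisymm i1 i2)

lemma ae_le_of_cont {f g : ℝ → ℝ} {x : ℝ} (h : ∀ᵐ x ∂(volume : Measure ℝ), f x ≤ g x)
    (hf : ContinuousAt f x) (hg : ContinuousAt g x) : f x ≤ g x := by
  by_contra! hlt
  have hev : ∀ᶠ y in 𝓝 x, g y < f y := hg.eventually_lt hf hlt
  have hd := Measure.dense_of_ae h
  obtain ⟨y, hy1, hy2⟩ := mem_closure_iff_nhds.1 (hd x) _ hev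
  have h1 : g y < f y := hy1
  have h2 : f y ≤ g y := hy2
  linarith

def HCo (H : ℝ → ℝ → ℝ) : Prop := ∀ lam : ℝ, ∃ c M : ℝ, 0 < c ∧ 0 < M ∧
  ∀ x p, M ≤ |p| → lam + c * p ^ 2 < H x p

lemma main_a {a : ℝ → ℝ} {H : ℝ → ℝ → ℝ} {phat : ℝ → ℝ} {κ η lam0 lam : ℝ}
    (hac : Continuous a) (ha : ∀ x, a x ∈ Icc (0:ℝ) 1) (hκ : 0 < κ)
    (haq : ∀ x y, a y = 0 → a x ≤ κ ^ 2 * (x - y) ^ 2)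
    (hleft : ∀ x, 0 < a x → ∃ l ≤ x, a l = 0)
    (hL : HLip H) (hco : HCo H) (hmin : ∀ x p, H x (phat x) ≤ H x p) (hη : 0 < η)
    (hdec : ∀ x p1 p2 : ℝ, p1 < p2 → p2 ≤ phat x → η * |p1 - p2| ≤ H x p1 - H x p2)
    (hinc : ∀ x p1 p2 : ℝ, phat x ≤ p1 → p1 < p2 → η * |p1 - p2| ≤ H x p2 - H x p1)
    (hlam : lam0 < lam) {u1 u2 v1 v2 : ℝ → ℝ}
    (hu1c : Continuous u1) (hu2c : Continuous u2) (hv1c : Continuous v1) (hv2c : Continuous v2)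
    (hu1 : QSub a H lam u1 ∧ QSuper a H lam u1) (hu2 : QSub a H lam u2 ∧ QSuper a H lam u2)
    (hv1 : QSub a H lam0 v1 ∧ QSuper a H lam0 v1) (hv2 : QSub a H lam0 v2 ∧ QSuper a H lam0 v2)
    (h1 : ∀ᵐ x ∂(volume : Measure ℝ), deriv v1 x ≤ deriv u1 x)
    (h2 : ∀ᵐ x ∂(volume : Measure ℝ), deriv v2 x ≤ deriv u2 x) :
    ∃ c : ℝ, ∀ x : ℝ, u1 x - u2 x = c := by
  obtain ⟨K, hK0, hKu1, hKu2, hKv1, hKv2⟩ : ∃ K, 0 ≤ K ∧ (∀ x y, |u1 y - u1 x| ≤ K * |y - x|) ∧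
      (∀ x y, |u2 y - u2 x| ≤ K * |y - x|) ∧ (∀ x y, |v1 y - v1 x| ≤ K * |y - x|) ∧
      (∀ x y, |v2 y - v2 x| ≤ K * |y - x|) := by
    obtain ⟨c, M, hc, hM, hcM⟩ := hco lam
    obtain ⟨c', M', hc', hM', hcM'⟩ := hco lam0
    refine ⟨max (2 * M) (2 * M'), by positivity, ?_, ?_, ?_, ?_⟩
    · exact fun x y => (lip_two hu1.2 hu1c ha hc hM hcM x y).trans
        (mul_le_mul_of_nonneg_right (le_max_left _ _) (abs_nonneg _))
    · exact fun x y => (lip_two hu2.2 hu2c ha hc hM hcM x y).trans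
        (mul_le_mul_of_nonneg_right (le_max_left _ _) (abs_nonneg _))
    · exact fun x y => (lip_two hv1.2 hv1c ha hc' hM' hcM' x y).trans
        (mul_le_mul_of_nonneg_right (le_max_right _ _) (abs_nonneg _))
    · exact fun x y => (lip_two hv2.2 hv2c ha hc' hM' hcM' x y).trans
        (mul_le_mul_of_nonneg_right (le_max_right _ _) (abs_nonneg _))
  have hLW : ∀ {u : ℝ → ℝ}, (∀ x y, |u y - u x| ≤ K * |y - x|) → LipschitzWith K.toNNReal u := by
    intro u hu
    apply LipschitzWith.of_dist_le_mul
    intro x y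
    rw [Real.dist_eq, Real.dist_eq, Real.coe_toNNReal _ hK0]
    exact hu y x
  -- equality of derivatives on A
  have hA : ∀ x0, 0 < a x0 → deriv u1 x0 = deriv u2 x0 := by
    intro x0 hx0
    obtain ⟨l0, hl0, hal0⟩ := hleft x0 hx0
    have hcl : IsCompact (Icc l0 x0 ∩ a ⁻¹' {0}) :=
      isCompact_Icc.inter_right (isClosed_singleton.preimage hac)
    obtain ⟨l, hl, hmax⟩ := hcl.exists_isGreatest ⟨l0, ⟨le_rfl, hl0⟩, hal0⟩
    have hal : a l = 0 := hl.2
    have hlx : l < x0 := lt_of_le_of_ne hl.1.2 (by rintro rfl; linarith)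
    have hapos : ∀ x, l < x → x ≤ x0 → 0 < a x := by
      intro x g1 g2
      refine lt_of_le_of_ne (ha x).1 ?_
      intro he
      have := hmax ⟨⟨by linarith [hl.1.1], g2⟩, he.symm⟩
      linarith
    refine comp_eq (z1 := deriv v1) (z2 := deriv v2) (K := K) hac hL hmin hη hdec hinc hκ hlx hapos
      (fun x => haq x l hal) hlam ?_ ?_ ?_ ?_ ?_ ?_
    · exact fun x g1 g2 => ⟨ode_main hv1c hac hL hK0 hv1.2 hv1.1 hKv1 (hapos x g1 g2),
        deriv_bound hK0 hKv1 x⟩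
    · exact fun x g1 g2 => ⟨ode_main hu1c hac hL hK0 hu1.2 hu1.1 hKu1 (hapos x g1 g2),
        deriv_bound hK0 hKu1 x⟩
    · exact fun x g1 g2 => ⟨ode_main hv2c hac hL hK0 hv2.2 hv2.1 hKv2 (hapos x g1 g2),
        deriv_bound hK0 hKv2 x⟩
    · exact fun x g1 g2 => ⟨ode_main hu2c hac hL hK0 hu2.2 hu2.1 hKu2 (hapos x g1 g2),
        deriv_bound hK0 hKu2 x⟩
    · exact fun x g1 g2 => ae_le_of_cont h1
        (ode_contDeriv hv1c hac hL hv1.2 hv1.1 hKv1 (hapos x g1 g2))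
        (ode_contDeriv hu1c hac hL hu1.2 hu1.1 hKu1 (hapos x g1 g2))
    · exact fun x g1 g2 => ae_le_of_cont h2
        (ode_contDeriv hv2c hac hL hv2.2 hv2.1 hKv2 (hapos x g1 g2))
        (ode_contDeriv hu2c hac hL hu2.2 hu2.1 hKu2 (hapos x g1 g2))
  -- branch on Z
  have hbr : ∀ x p r, r ≤ p → H x r = lam0 → H x p = lam → phat x ≤ p := by
    intro x p r hrp hr hp
    by_contra! hlt
    rcases hrp.eq_or_lt with he | he
    · subst he; linarith
    · have := hdec x r p he hlt.le
      have : 0 ≤ η * |r - p| := by positivity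
      linarith
  have hae : ∀ᵐ x ∂(volume : Measure ℝ), HasDerivAt (fun x => u1 x - u2 x) 0 x := by
    filter_upwards [h1, h2, (hLW hKu1).ae_differentiableAt_real, (hLW hKu2).ae_differentiableAt_real,
      (hLW hKv1).ae_differentiableAt_real, (hLW hKv2).ae_differentiableAt_real]
      with x g1 g2 d1 d2 d3 d4
    have hder := d1.hasDerivAt.fun_sub d2.hasDerivAt
    have heq : deriv u1 x = deriv u2 x := by
      rcases (ha x).1.eq_or_lt with hz | hz
      · have hay := fun t => haq t x hz.symm
        have ha0 := fun x => (ha x).1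
        have e1 := zpt_eq hu1c hL ha0 hay hu1.1 hu1.2 d1.hasDerivAt
        have e2 := zpt_eq hu2c hL ha0 hay hu2.1 hu2.2 d2.hasDerivAt
        have e3 := zpt_eq hv1c hL ha0 hay hv1.1 hv1.2 d3.hasDerivAt
        have e4 := zpt_eq hv2c hL ha0 hay hv2.1 hv2.2 d4.hasDerivAt
        have b1 := hbr x _ _ g1 e3 e1
        have b2 := hbr x _ _ g2 e4 e2
        rcases lt_trichotomy (deriv u1 x) (deriv u2 x) with hlt | he | hlt
        · have := hinc x _ _ b1 hlt
          have : 0 < η * |deriv u1 x - deriv u2 x| :=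
            mul_pos hη (abs_pos.2 (by linarith))
          linarith
        · exact he
        · have := hinc x _ _ b2 hlt
          have : 0 < η * |deriv u2 x - deriv u1 x| :=
            mul_pos hη (abs_pos.2 (by linarith))
          linarith
      · exact hA x hz
    rwa [heq, sub_self] at hder
  refine ⟨u1 0 - u2 0, fun x => ?_⟩
  have hac' : AbsolutelyContinuousOnInterval (fun x => u1 x - u2 x) 0 x :=
    ((hLW hKu1).sub (hLW hKu2)).lipschitzOnWith.absolutelyContinuousOnInterval
  obtain ⟨C, hC⟩ := hac'.const_of_ae_hasDerivAt_zero (by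
    filter_upwards [hae] with y hy _ using hy)
  rw [hC x right_mem_uIcc, hC 0 left_mem_uIcc]

lemma deriv_refl (f : ℝ → ℝ) (x : ℝ) : deriv (fun x => f (-x)) x = - deriv f (-x) := by
  exact deriv_comp_neg f x

lemma main_b {a : ℝ → ℝ} {H : ℝ → ℝ → ℝ} {phat : ℝ → ℝ} {κ η lam0 lam : ℝ}
    (hac : Continuous a) (ha : ∀ x, a x ∈ Icc (0:ℝ) 1) (hκ : 0 < κ)
    (haq : ∀ x y, a y = 0 → a x ≤ κ ^ 2 * (x - y) ^ 2)
    (hright : ∀ x, 0 < a x → ∃ l ≥ x, a l = 0)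
    (hL : HLip H) (hco : HCo H) (hmin : ∀ x p, H x (phat x) ≤ H x p) (hη : 0 < η)
    (hdec : ∀ x p1 p2 : ℝ, p1 < p2 → p2 ≤ phat x → η * |p1 - p2| ≤ H x p1 - H x p2)
    (hinc : ∀ x p1 p2 : ℝ, phat x ≤ p1 → p1 < p2 → η * |p1 - p2| ≤ H x p2 - H x p1)
    (hlam : lam0 < lam) {u1 u2 v1 v2 : ℝ → ℝ}
    (hu1c : Continuous u1) (hu2c : Continuous u2) (hv1c : Continuous v1) (hv2c : Continuous v2)
    (hu1 : QSub a H lam u1 ∧ QSuper a H lam u1) (hu2 : QSub a H lam u2 ∧ QSuper a H lam u2)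
    (hv1 : QSub a H lam0 v1 ∧ QSuper a H lam0 v1) (hv2 : QSub a H lam0 v2 ∧ QSuper a H lam0 v2)
    (h1 : ∀ᵐ x ∂(volume : Measure ℝ), deriv u1 x ≤ deriv v1 x)
    (h2 : ∀ᵐ x ∂(volume : Measure ℝ), deriv u2 x ≤ deriv v2 x) :
    ∃ c : ℝ, ∀ x : ℝ, u1 x - u2 x = c := by
  have hq : Tendsto (fun x : ℝ => -x) (ae volume) (ae volume) :=
    (Measure.measurePreserving_neg (volume : Measure ℝ)).quasiMeasurePreserving.tendsto_ae
  obtain ⟨c, hc⟩ := main_a (a := fun x => a (-x)) (H := fun x p => H (-x) (-p))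
    (phat := fun x => - phat (-x)) (κ := κ) (η := η) (lam0 := lam0) (lam := lam)
    (u1 := fun x => u1 (-x)) (u2 := fun x => u2 (-x)) (v1 := fun x => v1 (-x))
    (v2 := fun x => v2 (-x)) (by fun_prop) (fun x => ha (-x)) hκ
    (fun x y hy => by
      have := haq (-x) (-y) hy
      have e : (-x - -y) ^ 2 = (x - y) ^ 2 := by ring
      rwa [e] at this)
    (fun x hx => by
      obtain ⟨l, hl, h0⟩ := hright (-x) hx
      exact ⟨-l, by linarith, by simpa using h0⟩)
    hL.refl (fun m => by
      obtain ⟨c, M, hc, hM, h⟩ := hco m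
      refine ⟨c, M, hc, hM, fun x p hp => ?_⟩
      have := h (-x) (-p) (by rwa [abs_neg])
      rwa [neg_sq] at this)
    (fun x p => by simpa using hmin (-x) (-p)) hη
    (fun x p1 p2 hp h => by
      have := hinc (-x) (-p2) (-p1) (by linarith) (by linarith)
      convert this using 3
      ring)
    (fun x p1 p2 h hp => by
      have := hdec (-x) (-p2) (-p1) (by linarith) (by linarith)
      convert this using 3
      ring)
    hlam (by fun_prop) (by fun_prop) (by fun_prop) (by fun_prop)
    ⟨hu1.1.refl, hu1.2.refl⟩ ⟨hu2.1.refl, hu2.2.refl⟩ ⟨hv1.1.refl, hv1.2.refl⟩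
    ⟨hv2.1.refl, hv2.2.refl⟩
    (by
      filter_upwards [hq.eventually h1] with x hx
      rw [deriv_refl, deriv_refl]; linarith)
    (by
      filter_upwards [hq.eventually h2] with x hx
      rw [deriv_refl, deriv_refl]; linarith)
  refine ⟨c, fun x => ?_⟩
  have := hc (-x)
  simpa using this

lemma ham_lip {a0 a1 g : ℝ} {H : ℝ → ℝ → ℝ} (h1 : 0 < a1) (hg : 2 < g) (h : HamClass a0 a1 g H) :
    HLip H := by
  intro R
  obtain ⟨-, -, hp, hx⟩ := h
  refine ⟨a1 * (2 * |R| + 1) ^ (g - 1) + a1 * (|R| ^ g + 1), by positivity, ?_, ?_⟩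
  · intro x p q hpR hqR
    refine (hp x p q).trans (mul_le_mul_of_nonneg_right ?_ (abs_nonneg _))
    have : (|p| + |q| + 1) ^ (g - 1) ≤ (2 * |R| + 1) ^ (g - 1) :=
      Real.rpow_le_rpow (by positivity) (by linarith [le_abs_self R]) (by linarith)
    have h2 := mul_le_mul_of_nonneg_left this h1.le
    have : 0 ≤ a1 * (|R| ^ g + 1) := by positivity
    linarith
  · intro x y p hpR
    refine (hx x y p).trans (mul_le_mul_of_nonneg_right ?_ (abs_nonneg _))
    have : |p| ^ g ≤ |R| ^ g :=
      Real.rpow_le_rpow (by positivity) (by linarith [le_abs_self R]) (by linarith)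
    have h2 := mul_le_mul_of_nonneg_left this h1.le
    have : 0 ≤ a1 * (2 * |R| + 1) ^ (g - 1) := by positivity
    linarith

lemma ham_co {a0 a1 g : ℝ} {H : ℝ → ℝ → ℝ} (h0 : 0 < a0) (hg : 2 < g) (h : HamClass a0 a1 g H) :
    HCo H := by
  intro lam
  have hb := h.1
  set C := |lam| + 1 / a0 + 1 with hC
  have hC0 : 0 < C := by positivity
  refine ⟨a0 / 2, max 1 (2 * C / a0), by positivity, by positivity, ?_⟩
  intro x p hp
  have hp1 : 1 ≤ |p| := (le_max_left _ _).trans hp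
  have hp2 : 2 * C / a0 ≤ |p| := (le_max_right _ _).trans hp
  rw [div_le_iff₀ h0] at hp2
  have h3 : p ^ 2 ≤ |p| ^ g := by
    rw [← sq_abs]
    have := Real.rpow_le_rpow_of_exponent_le hp1 hg.le
    simpa using this
  have h4 : |p| ≤ p ^ 2 := by rw [← sq_abs]; nlinarith
  have h5 := hb x p
  have h6 := mul_le_mul_of_nonneg_left h3 h0.le
  have h7 := mul_le_mul_of_nonneg_left h4 h0.le
  have := le_abs_self lam
  linarith

lemma visc_q {a H lam u} (h : ViscSolOn a H lam Set.univ u) : QSub a H lam u ∧ QSuper a H lam u := by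
  refine ⟨?_, ?_⟩
  · intro A B x0 hm
    have := h.1 (fun x => A * x ^ 2 + B * x) (by fun_prop) x0 trivial hm
    rwa [(quad_derivs A B x0).1, (quad_derivs A B x0).2] at this
  · intro A B x0 hm
    have := h.2 (fun x => A * x ^ 2 + B * x) (by fun_prop) x0 trivial hm
    rwa [(quad_derivs A B x0).1, (quad_derivs A B x0).2] at this

lemma cond_left {a : ℝ → ℝ} (ha : ∀ x, a x ∈ Icc (0:ℝ) 1) (h : CondA1' a) (x : ℝ) (hx : 0 < a x) :
    ∃ l ≤ x, a l = 0 := by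
  by_contra! hc
  have hsub : Iic x ⊆ connectedComponentIn {y : ℝ | 0 < a y} x :=
    isPreconnected_Iic.subset_connectedComponentIn self_mem_Iic
      (fun y hy => lt_of_le_of_ne (ha y).1 (hc y hy).symm)
  have := ((h.2 x hx).subset hsub).bddBelow
  exact not_bddBelow_Iic x this

lemma cond_right {a : ℝ → ℝ} (ha : ∀ x, a x ∈ Icc (0:ℝ) 1) (h : CondA1' a) (x : ℝ) (hx : 0 < a x) :
    ∃ l ≥ x, a l = 0 := by
  by_contra! hc
  have hsub : Ici x ⊆ connectedComponentIn {y : ℝ | 0 < a y} x :=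
    isPreconnected_Ici.subset_connectedComponentIn self_mem_Ici
      (fun y hy => lt_of_le_of_ne (ha y).1 (hc y hy).symm)
  have := ((h.2 x hx).subset hsub).bddAbove
  exact not_bddAbove_Ici x this

lemma sqrt_cont {a : ℝ → ℝ} {κ : ℝ} (hκ : 0 < κ) (ha : ∀ x, a x ∈ Icc (0:ℝ) 1)
    (h : ∀ x y : ℝ, |Real.sqrt (a x) - Real.sqrt (a y)| ≤ κ * |x - y|) : Continuous a := by
  have h1 : LipschitzWith κ.toNNReal (fun x => Real.sqrt (a x)) := by
    apply LipschitzWith.of_dist_le_mul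
    intro x y
    rw [Real.dist_eq, Real.dist_eq, Real.coe_toNNReal _ hκ.le]
    exact h x y
  have h2 : a = fun x => Real.sqrt (a x) ^ 2 := by
    funext x; rw [Real.sq_sqrt (ha x).1]
  rw [h2]
  exact h1.continuous.pow 2

lemma sqrt_quad {a : ℝ → ℝ} {κ : ℝ} (ha : ∀ x, a x ∈ Icc (0:ℝ) 1)
    (h : ∀ x y : ℝ, |Real.sqrt (a x) - Real.sqrt (a y)| ≤ κ * |x - y|) (x y : ℝ) (hy : a y = 0) :
    a x ≤ κ ^ 2 * (x - y) ^ 2 := by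
  have h1 := h x y
  rw [hy, Real.sqrt_zero, sub_zero, abs_of_nonneg (Real.sqrt_nonneg _)] at h1
  have := pow_le_pow_left₀ (Real.sqrt_nonneg _) h1 2
  rwa [Real.sq_sqrt (ha x).1, mul_pow, sq_abs] at this

/-- Theorem `appC teo uniqueness`: let `lam > λ₀`, `u1, u2` viscosity
solutions at level `lam` and `v1, v2` viscosity solutions at level `λ₀`.  If `uᵢ' ≥ vᵢ'`
a.e. on `ℝ` for each `i`, then `u1 - u2` is constant; likewise if `uᵢ' ≤ vᵢ'` a.e. -/
theorem statement_14
    (a : ℝ → ℝ) (H : ℝ → ℝ → ℝ) (phat : ℝ → ℝ)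
    (κ α0 α1 γ η : ℝ)
    (harange : ∀ x, a x ∈ Set.Icc (0:ℝ) 1)
    (hκ : 0 < κ) (hA2 : ∀ x y : ℝ, |Real.sqrt (a x) - Real.sqrt (a y)| ≤ κ * |x - y|)
    (hA1' : CondA1' a)
    (hα0 : 0 < α0) (hα1 : 0 < α1) (hγ : 2 < γ) (hη : 0 < η)
    (hH : HamSqc α0 α1 γ η H phat)
    (lam0 : ℝ) (hlam0 : lam0 = CriticalValue a H)
    (lam : ℝ) (hlam : lam0 < lam)
    (u1 u2 v1 v2 : ℝ → ℝ)
    (hu1c : Continuous u1) (hu2c : Continuous u2) (hv1c : Continuous v1)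
    (hv2c : Continuous v2)
    (hu1 : ViscSolOn a H lam Set.univ u1) (hu2 : ViscSolOn a H lam Set.univ u2)
    (hv1 : ViscSolOn a H lam0 Set.univ v1) (hv2 : ViscSolOn a H lam0 Set.univ v2) :
    ((∀ᵐ x ∂(volume : Measure ℝ), deriv v1 x ≤ deriv u1 x) →
     (∀ᵐ x ∂(volume : Measure ℝ), deriv v2 x ≤ deriv u2 x) →
      ∃ c : ℝ, ∀ x : ℝ, u1 x - u2 x = c) ∧
    ((∀ᵐ x ∂(volume : Measure ℝ), deriv u1 x ≤ deriv v1 x) →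
     (∀ᵐ x ∂(volume : Measure ℝ), deriv u2 x ≤ deriv v2 x) →
      ∃ c : ℝ, ∀ x : ℝ, u1 x - u2 x = c) := by
  have hac := sqrt_cont hκ harange hA2
  have haq := sqrt_quad harange hA2
  have hL := ham_lip hα1 hγ hH.1
  have hco := ham_co hα0 hγ hH.1
  obtain ⟨-, hmin, -, hdec, hinc⟩ := hH
  refine ⟨fun h1 h2 => ?_, fun h1 h2 => ?_⟩
  · exact main_a hac harange hκ haq (cond_left harange hA1') hL hco hmin hη hdec hinc hlam
      hu1c hu2c hv1c hv2c (visc_q hu1) (visc_q hu2) (visc_q hv1) (visc_q hv2) h1 h2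
  · exact main_b hac harange hκ haq (cond_right harange hA1') hL hco hmin hη hdec hinc hlam
      hu1c hu2c hv1c hv2c (visc_q hu1) (visc_q hu2) (visc_q hv1) (visc_q hv2) h1 h2
end
end

section
/- Let a : ℝ → [0,1] satisfy (A1') and have √a κ-Lipschitz, and H ∈ 𝓗_sqc(α0,α1,γ,η) with γ > 2. Let λ > sup_{x∈{a=0}} λ̂(x) and assume there exists a bounded function f ∈ C¹(A) satisfying a(x)f' + H(x,f) = λ on A := {a > 0}. Extend f to all of ℝ by setting f(x) = p⁺_λ(x) for x ∈ {a = 0}. Then the function u(x) := ∫₀ˣ f(z) dz, x ∈ ℝ, is a Lipschitz viscosity supersolution of a(x)u'' + H(x,u') = λ on ℝ. -/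
open Real Set Filter Topology MeasureTheory

noncomputable section

lemma keyL (a f : ℝ → ℝ) (K M θ q x0 x1 : ℝ) (hac : Continuous a) (ha0 : ∀ x, 0 ≤ a x)
    (hK : 0 < K) (haK : ∀ z c, a c = 0 → a z ≤ K * (c - z)^2)
    (hd : ∀ z, 0 < a z → DifferentiableAt ℝ f z)
    (hM : ∀ z, 0 < a z → |f z| ≤ M) (hθ : 0 < θ)
    (h10 : x1 < x0) (hx0 : a x0 = 0) (hx1 : 0 < a x1) (hq : f x1 ≤ q)
    (hb : ∀ z ∈ Icc x1 x0, 0 < a z → f z ≤ q → a z * deriv f z ≤ -θ) : False := by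
  obtain ⟨c, ⟨⟨hc0, hc1⟩, hcmin⟩⟩ : ∃ c, IsLeast ({z | a z = 0} ∩ Icc x1 x0) c := by
    apply IsCompact.exists_isLeast
    · exact (isCompact_Icc).inter_left (isClosed_eq hac continuous_const)
    · exact ⟨x0, hx0, h10.le, le_rfl⟩
  have hc0 : a c = 0 := hc0
  have hxc : x1 < c := by
    rcases hc1.1.lt_or_eq with h | h
    · exact h
    · rw [h] at hx1; linarith
  have hpos : ∀ z, x1 ≤ z → z < c → 0 < a z := by
    intro z h1 h2
    rcases (ha0 z).lt_or_eq with h | h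
    · exact h
    · have := hcmin ⟨h.symm, h1, h2.le.trans hc1.2⟩
      linarith
  have hle : ∀ y, x1 ≤ y → y < c → f y ≤ q := by
    intro y h1 h2
    refine image_le_of_deriv_right_lt_deriv_boundary (f := f) (f' := deriv f) (a := x1) (b := y)
      (B := fun _ => q) (B' := fun _ => 0) ?_ ?_ hq (fun x => hasDerivAt_const x q) ?_ ⟨h1, le_rfl⟩
    · intro z hz
      exact (hd z (hpos z hz.1 (hz.2.trans_lt h2))).continuousAt.continuousWithinAt
    · intro z hz
      exact (hd z (hpos z hz.1 (hz.2.trans h2))).hasDerivAt.hasDerivWithinAt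
    · intro z hz he
      have hp := hpos z hz.1 (hz.2.trans h2)
      have := hb z ⟨hz.1, by linarith [hz.2, hc1.2]⟩ hp he.le
      by_contra hcon
      have : 0 ≤ a z * deriv f z := mul_nonneg hp.le (not_lt.1 hcon)
      linarith
  obtain ⟨C, hC⟩ : ∃ C, C = θ / K := ⟨_, rfl⟩
  have hCp : 0 < C := hC ▸ div_pos hθ hK
  have hg : ∀ y, x1 ≤ y → y < c → f y + C / (c - y) ≤ f x1 + C / (c - x1) := by
    intro y h1 h2
    have hD : ∀ z, x1 ≤ z → z < c →
        HasDerivAt (fun z => f z + C / (c - z)) (deriv f z + C / (c - z)^2) z := by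
      intro z hz1 hz2
      have hne : c - z ≠ 0 := by linarith
      have h := ((hasDerivAt_id z).const_sub c).inv hne
      have h' := (hd z (hpos z hz1 hz2)).hasDerivAt.add (h.const_mul C)
      have e1 : (f + fun y => C * (fun x => c - id x)⁻¹ y) = fun z => f z + C / (c - z) := by
        funext y
        simp [div_eq_mul_inv]
      have e2 : deriv f z + C * (- -1 / (c - id z) ^ 2) = deriv f z + C / (c - z)^2 := by
        simp [div_eq_mul_inv]
      rw [e1, e2] at h'
      exact h'
    have hanti : AntitoneOn (fun z => f z + C / (c - z)) (Icc x1 y) := by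
      apply antitoneOn_of_deriv_nonpos (convex_Icc _ _)
      · intro z hz
        exact (hD z hz.1 (hz.2.trans_lt h2)).continuousAt.continuousWithinAt
      · intro z hz
        rw [interior_Icc] at hz
        exact (hD z hz.1.le (hz.2.trans h2)).differentiableAt.differentiableWithinAt
      · intro z hz
        rw [interior_Icc] at hz
        have hzc := hz.2.trans h2
        rw [(hD z hz.1.le hzc).deriv]
        have hp := hpos z hz.1.le hzc
        have h3 := hb z ⟨hz.1.le, by linarith [hc1.2]⟩ hp (hle z hz.1.le hzc)
        have h4 := haK z c hc0
        have h5 : 0 < (c - z)^2 := by have : 0 < c - z := by linarith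
                                      positivity
        have h6 : a z * (C / (c - z)^2) ≤ θ := by
          rw [hC]
          have : a z * (θ / K / (c - z)^2) = θ * (a z / (K * (c - z)^2)) := by
            field_simp
          rw [this]
          have : a z / (K * (c - z)^2) ≤ 1 := (div_le_one (by positivity)).2 h4
          nlinarith
        have h7 : a z * (deriv f z + C / (c - z)^2) ≤ 0 := by linarith
        by_contra hcon
        have := mul_pos hp (not_le.1 hcon)
        linarith
    exact hanti ⟨le_rfl, h1⟩ ⟨h1, le_rfl⟩ h1
  obtain ⟨B, hB⟩ : ∃ B, B = M + f x1 + C / (c - x1) := ⟨_, rfl⟩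
  have hcx : 0 < c - x1 := by linarith
  have hB1 : C / (c - x1) ≤ B := by
    have := (abs_le.1 (hM x1 hx1)).1
    linarith
  have hBp : 0 < B := lt_of_lt_of_le (div_pos hCp hcx) hB1
  have ht : 0 < C / (B + 1) := by positivity
  have ht2 : C / (B + 1) < c - x1 := by
    rw [div_lt_iff₀ (by positivity)]
    rw [div_le_iff₀ hcx] at hB1
    nlinarith
  have h1 := hg (c - C / (B + 1)) (by linarith) (by linarith)
  have h2 := (abs_le.1 (hM (c - C / (B + 1)) (hpos _ (by linarith) (by linarith)))).1
  have h3 : C / (c - (c - C / (B + 1))) = B + 1 := by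
    rw [sub_sub_cancel]; field_simp
  rw [h3] at h1
  linarith

lemma keyR (a f : ℝ → ℝ) (K M θ q x0 x1 : ℝ) (hac : Continuous a) (ha0 : ∀ x, 0 ≤ a x)
    (hK : 0 < K) (haK : ∀ z c, a c = 0 → a z ≤ K * (c - z)^2)
    (hd : ∀ z, 0 < a z → DifferentiableAt ℝ f z)
    (hM : ∀ z, 0 < a z → |f z| ≤ M) (hθ : 0 < θ)
    (h10 : x0 < x1) (hx0 : a x0 = 0) (hx1 : 0 < a x1) (hq : q ≤ f x1)
    (hb : ∀ z ∈ Icc x0 x1, 0 < a z → q ≤ f z → a z * deriv f z ≤ -θ) : False := by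
  refine keyL (fun x => a (-x)) (fun x => - f (-x)) K M θ (-q) (-x0) (-x1) (by fun_prop)
    (fun x => ha0 _) hK ?_ ?_ ?_ hθ (by linarith) (by simpa) (by simpa) (by simpa) ?_
  · intro z c h
    have := haK (-z) (-c) h
    nlinarith
  · intro z hz
    have h := hd (-z) hz
    exact (h.comp z differentiableAt_id.neg).neg
  · intro z hz
    simpa using hM (-z) hz
  · intro z hz h1 h2
    have h3 := hb (-z) ⟨by linarith [hz.2], by linarith [hz.1]⟩ h1 (by linarith)
    have h4 : deriv (fun x => - f (-x)) z = deriv f (-z) := by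
      rw [deriv.fun_neg, deriv_comp_neg]; simp
    simpa [h4] using h3

/-- Theorem `appC teo supersolution`: let `lam > sup_{x∈{a=0}} λ̂(x)` and
let `f` be a bounded `C¹` solution of `a f' + H(x,f) = lam` on `A := {a > 0}`, extended by
`f = p⁺_lam` on `{a = 0}`.  Then `u(x) := ∫₀ˣ f` is a Lipschitz viscosity supersolution of
`a u'' + H(x,u') = lam` on `ℝ`. -/
theorem statement_17
    (a : ℝ → ℝ) (H : ℝ → ℝ → ℝ) (phat : ℝ → ℝ) (pm pp : ℝ → ℝ → ℝ)
    (κ α0 α1 γ η : ℝ)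
    (harange : ∀ x, a x ∈ Set.Icc (0:ℝ) 1)
    (hκ : 0 < κ) (hA2 : ∀ x y : ℝ, |Real.sqrt (a x) - Real.sqrt (a y)| ≤ κ * |x - y|)
    (hA1' : CondA1' a)
    (hα0 : 0 < α0) (hα1 : 0 < α1) (hγ : 2 < γ) (hη : 0 < η)
    (hH : HamSqc α0 α1 γ η H phat)
    (hp : ∀ lam x : ℝ, H x (phat x) ≤ lam →
      {p : ℝ | H x p ≤ lam} = Set.Icc (pm lam x) (pp lam x))
    (lam : ℝ)
    -- `lam > sup_{x ∈ {a=0}} λ̂(x)`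
    (hlam : ∃ c : ℝ, c < lam ∧ ∀ x : ℝ, a x = 0 → H x (phat x) ≤ c)
    (f : ℝ → ℝ)
    (hf1 : ContDiffOn ℝ 1 f {x : ℝ | 0 < a x})
    (hfbdd : ∃ M : ℝ, ∀ x : ℝ, 0 < a x → |f x| ≤ M)
    (hode : ∀ x : ℝ, 0 < a x → a x * deriv f x + H x (f x) = lam)
    (hext : ∀ x : ℝ, a x = 0 → f x = pp lam x) :
    (∃ K : ℝ, ∀ x y : ℝ,
      |(∫ t in (0:ℝ)..x, f t) - ∫ t in (0:ℝ)..y, f t| ≤ K * |x - y|) ∧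
    ViscSuperOn a H lam Set.univ (fun x => ∫ t in (0:ℝ)..x, f t) := by
  obtain ⟨⟨hH1, hH1', hH2, hH3⟩, hmin, -, hsl, hsr⟩ := hH
  obtain ⟨c, hc, hcle⟩ := hlam
  obtain ⟨M0, hM0⟩ := hfbdd
  have ha0 : ∀ x, 0 ≤ a x := fun x => (harange x).1
  have haz : ∀ x, ¬ 0 < a x → a x = 0 := fun x h => le_antisymm (not_lt.1 h) (ha0 x)
  -- continuity of `a`
  have hsc : Continuous (fun x => Real.sqrt (a x)) := by
    have : LipschitzWith (Real.toNNReal κ) (fun x => Real.sqrt (a x)) := by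
      apply LipschitzWith.of_dist_le_mul
      intro x y
      rw [Real.dist_eq, Real.dist_eq, Real.coe_toNNReal _ hκ.le]
      exact hA2 x y
    exact this.continuous
  have hac : Continuous a := by
    have : a = fun x => (Real.sqrt (a x))^2 := by
      funext x; rw [Real.sq_sqrt (ha0 x)]
    rw [this]; exact hsc.pow 2
  have haK : ∀ z c, a c = 0 → a z ≤ κ^2 * (c - z)^2 := by
    intro z c h
    have h1 := hA2 z c
    rw [h, Real.sqrt_zero, sub_zero, abs_of_nonneg (Real.sqrt_nonneg _)] at h1
    have h2 := Real.sq_sqrt (ha0 z)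
    have h3 : (Real.sqrt (a z))^2 ≤ (κ * |z - c|)^2 :=
      pow_le_pow_left₀ (Real.sqrt_nonneg _) h1 2
    rw [mul_pow, sq_abs] at h3
    nlinarith
  have hAo : IsOpen {x : ℝ | 0 < a x} := isOpen_lt continuous_const hac
  have hd : ∀ z, 0 < a z → DifferentiableAt ℝ f z := fun z hz =>
    (hf1.differentiableOn (by norm_num)).differentiableAt (hAo.mem_nhds hz)
  -- properties of `pp`, `pm`
  have hset : ∀ x, a x = 0 → ∀ p, H x p ≤ lam ↔ (pm lam x ≤ p ∧ p ≤ pp lam x) := by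
    intro x hx p
    have := hp lam x ((hcle x hx).trans hc.le)
    exact Set.ext_iff.1 this p
  have hph : ∀ x, a x = 0 → pm lam x ≤ phat x ∧ phat x ≤ pp lam x := fun x hx =>
    (hset x hx _).1 ((hcle x hx).trans hc.le)
  have hHpp : ∀ x, a x = 0 → H x (pp lam x) ≤ lam := fun x hx =>
    (hset x hx _).2 ⟨(hph x hx).1.trans (hph x hx).2, le_rfl⟩
  -- boundedness
  obtain ⟨M1, hM1⟩ : ∃ M1, ∀ x p, H x p ≤ lam → |p| ≤ M1 := by
    refine ⟨max 1 ((lam + 1/α0)/α0), fun x p h => ?_⟩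
    have h1 := hH1 x p
    by_cases h2 : |p| ≤ 1
    · exact h2.trans (le_max_left _ _)
    · apply le_trans _ (le_max_right _ _)
      rw [le_div_iff₀ hα0]
      have h3 : |p| ≤ |p| ^ γ := by
        calc |p| = |p| ^ (1:ℝ) := (Real.rpow_one _).symm
          _ ≤ |p| ^ γ := Real.rpow_le_rpow_of_exponent_le (not_le.1 h2).le (by linarith)
      nlinarith
  obtain ⟨M, hMd⟩ : ∃ M, M = max M0 (max M1 0) := ⟨_, rfl⟩
  have hMnn : 0 ≤ M := by rw [hMd]; exact (le_max_right _ _).trans (le_max_right _ _)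
  have hM : ∀ x, |f x| ≤ M := by
    intro x
    by_cases h : 0 < a x
    · rw [hMd]; exact (hM0 x h).trans (le_max_left _ _)
    · have h := haz x h
      rw [hMd, hext x h]
      exact (hM1 x _ (hHpp x h)).trans ((le_max_left _ _).trans (le_max_right _ _))
  obtain ⟨L, hLd⟩ : ∃ L, L = α1 * (M ^ γ + 1) := ⟨_, rfl⟩
  have hLp : 0 < L := by rw [hLd]; have := Real.rpow_nonneg hMnn γ; positivity
  have hL : ∀ x y p, |p| ≤ M → |H x p - H y p| ≤ L * |x - y| := by
    intro x y p hpM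
    refine (hH3 x y p).trans ?_
    rw [hLd]
    have := Real.rpow_le_rpow (abs_nonneg p) hpM (by linarith : 0 ≤ γ)
    gcongr
  -- uniform strictness
  have hstrict : ∀ ε > 0, ∃ δ > 0, ∃ θ > 0, ∀ x y p, a x = 0 → |y - x| < δ → |p| ≤ M →
      (pp lam x + ε ≤ p ∨ p ≤ pm lam x - ε) → lam + θ ≤ H y p := by
    intro ε hε
    refine ⟨η * ε / 4 / L, by positivity, η * ε / 4, by positivity, ?_⟩
    intro x y p hx hxy hpM hor
    have h1 := (abs_le.1 (hL y x p hpM)).1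
    have h2 : L * |y - x| < η * ε / 4 := by
      rw [lt_div_iff₀ hLp] at hxy; linarith
    have h3 : lam + η * ε / 2 ≤ H x p := by
      rcases hor with h | h
      · have h4 : lam < H x (pp lam x + ε/2) := by
          by_contra hcon
          have := ((hset x hx _).1 (not_lt.1 hcon)).2
          linarith
        have h5 := hsr x (pp lam x + ε/2) p (by linarith [(hph x hx).2]) (by linarith)
        rw [abs_of_nonpos (by linarith)] at h5
        nlinarith
      · have h4 : lam < H x (pm lam x - ε/2) := by
          by_contra hcon
          have := ((hset x hx _).1 (not_lt.1 hcon)).1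
          linarith
        have h5 := hsl x p (pm lam x - ε/2) (by linarith) (by linarith [(hph x hx).1])
        rw [abs_of_nonpos (by linarith)] at h5
        nlinarith
    linarith
  -- continuity of `f` on the zero set, measurability
  have hfc : ContinuousOn f {x : ℝ | 0 < a x}ᶜ := by
    intro x hx
    have hx : a x = 0 := haz x hx
    rw [Metric.continuousWithinAt_iff]
    intro ε hε
    obtain ⟨δ, hδ, θ, hθ, hs⟩ := hstrict ε hε
    refine ⟨δ, hδ, fun y hy hyx => ?_⟩
    have hy : a y = 0 := haz y hy
    rw [Real.dist_eq] at hyx ⊢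
    rw [abs_lt]
    have hfx := hM x
    have hfy := hM y
    rw [hext x hx, hext y hy] at *
    constructor
    · by_contra hcon
      have := hs y x (pp lam x) hy (by rwa [abs_sub_comm]) hfx (Or.inl (by linarith))
      linarith [hHpp x hx]
    · by_contra hcon
      have := hs x y (pp lam y) hx hyx hfy (Or.inl (by linarith))
      linarith [hHpp y hy]
  have hfm : Measurable f := by
    classical
    have := ContinuousOn.measurable_piecewise hf1.continuousOn hfc hAo.measurableSet
    simpa using this
  have hint : ∀ x y, IntervalIntegrable f volume x y := by
    intro x y
    apply (intervalIntegrable_const (c := M)).mono_fun hfm.aestronglyMeasurable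
    refine Filter.Eventually.of_forall fun t => ?_
    change |f t| ≤ |M|
    exact (hM t).trans (le_abs_self _)
  have hsub : ∀ x y, (∫ t in (0:ℝ)..x, f t) - ∫ t in (0:ℝ)..y, f t = ∫ t in y..x, f t :=
    fun x y => intervalIntegral.integral_interval_sub_left (hint _ _) (hint _ _)
  refine ⟨⟨M, fun x y => ?_⟩, ?_⟩
  · rw [hsub]
    exact intervalIntegral.norm_integral_le_of_norm_le_const (f := f) (C := M) (fun t _ => hM t)
  intro φ hφ x0 _ hloc
  have hφd : Differentiable ℝ φ := hφ.differentiable (by norm_num)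
  have hφdd : Differentiable ℝ (deriv φ) := by
    have : ContDiff ℝ 1 (deriv φ) := by
      have h2 : ContDiff ℝ (1 + 1) φ := by simpa [one_add_one_eq_two] using hφ
      exact (contDiff_succ_iff_deriv.1 h2).2.2
    exact this.differentiable (by norm_num)
  by_cases hax : 0 < a x0
  · have hu : ∀ x, 0 < a x → HasDerivAt (fun x => ∫ t in (0:ℝ)..x, f t) (f x) x := fun x hx =>
      intervalIntegral.integral_hasDerivAt_right (hint _ _)
        (hfm.stronglyMeasurable.stronglyMeasurableAtFilter) (hd x hx).continuousAt
    obtain ⟨w, hw⟩ : ∃ w : ℝ → ℝ, w = fun x => (∫ t in (0:ℝ)..x, f t) - φ x := ⟨_, rfl⟩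
    rw [← hw] at hloc
    have hwd : ∀ x, 0 < a x → HasDerivAt w (f x - deriv φ x) x := fun x hx => by
      rw [hw]; exact (hu x hx).sub (hφd x).hasDerivAt
    have hev : deriv w =ᶠ[𝓝 x0] fun x => f x - deriv φ x := by
      filter_upwards [hAo.mem_nhds hax] with x hx using (hwd x hx).deriv
    have hdd : deriv (deriv w) x0 = deriv f x0 - deriv (deriv φ) x0 := by
      rw [hev.deriv_eq]
      exact ((hd x0 hax).hasDerivAt.sub (hφdd x0).hasDerivAt).deriv
    have hz : deriv w x0 = 0 := hloc.deriv_eq_zero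
    have hge : 0 ≤ deriv (deriv w) x0 := by
      by_contra hcon
      have hmax := isLocalMax_of_deriv_deriv_neg (not_le.1 hcon) hz (hwd x0 hax).continuousAt
      have hconst : w =ᶠ[𝓝 x0] fun _ => w x0 := by
        filter_upwards [hloc, hmax] with x h1 h2 using le_antisymm h2 h1
      have h2 := hconst.deriv.deriv_eq
      simp at h2
      exact hcon h2.ge
    have h1 := (hwd x0 hax).deriv
    have h2 : deriv φ x0 = f x0 := by linarith
    rw [h2, ← hode x0 hax]
    have : a x0 * deriv (deriv φ) x0 ≤ a x0 * deriv f x0 :=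
      mul_le_mul_of_nonneg_left (by linarith) (ha0 x0)
    linarith
  · have hx0 := haz x0 hax
    rw [hx0, zero_mul, zero_add, hset x0 hx0]
    have hslope := hasDerivAt_iff_tendsto_slope.1 (hφd x0).hasDerivAt
    constructor
    · by_contra hcon
      obtain ⟨ε, hεd⟩ : ∃ ε, ε = (pm lam x0 - deriv φ x0) / 2 := ⟨_, rfl⟩
      have hε : 0 < ε := by rw [hεd]; linarith [not_le.1 hcon]
      obtain ⟨δ, hδ, θ, hθ, hs⟩ := hstrict ε hε
      have hf : ∀ x, x < x0 → x0 - δ < x → pm lam x0 - ε ≤ f x := by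
        intro x h1 h2
        by_contra hlt
        have hlt := (not_le.1 hlt).le
        by_cases hxa : 0 < a x
        · refine keyL a f (κ^2) M θ (pm lam x0 - ε) x0 x hac ha0 (by positivity) haK hd
            (fun z _ => hM z) hθ h1 hx0 hxa hlt ?_
          intro z hz hza hzf
          have := hs x0 z (f z) hx0 (by rw [abs_lt]; constructor <;> linarith [hz.1, hz.2])
            (hM z) (Or.inr hzf)
          linarith [hode z hza]
        · have hxa := haz x hxa
          have := hs x0 x (f x) hx0 (by rw [abs_lt]; constructor <;> linarith)
            (hM x) (Or.inr hlt)
          rw [hext x hxa] at this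
          linarith [hHpp x hxa]
      have hsl' : Tendsto (slope φ x0) (𝓝[<] x0) (𝓝 (deriv φ x0)) :=
        hslope.mono_left (nhdsWithin_mono _ fun x hx => ne_of_lt hx)
      have : pm lam x0 - ε ≤ deriv φ x0 := by
        refine ge_of_tendsto hsl' ?_
        filter_upwards [self_mem_nhdsWithin, nhdsWithin_le_nhds hloc,
          nhdsWithin_le_nhds (Ioi_mem_nhds (show x0 - δ < x0 by linarith))] with x h1 h2 h3
        have h1 : x < x0 := h1
        have h3 : x0 - δ < x := h3
        have h4 : (x0 - x) * (pm lam x0 - ε) ≤ ∫ t in x..x0, f t := by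
          have := intervalIntegral.integral_mono_on_of_le_Ioo (f := fun _ => pm lam x0 - ε)
            (g := f) h1.le intervalIntegrable_const (hint x x0)
            (fun t ht => hf t ht.2 (h3.trans ht.1))
          rwa [intervalIntegral.integral_const, smul_eq_mul] at this
        rw [← hsub x0 x] at h4
        rw [slope_comm, slope_def_field, le_div_iff₀ (by linarith)]
        linarith
      linarith
    · by_contra hcon
      obtain ⟨ε, hεd⟩ : ∃ ε, ε = (deriv φ x0 - pp lam x0) / 2 := ⟨_, rfl⟩
      have hε : 0 < ε := by rw [hεd]; linarith [not_le.1 hcon]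
      obtain ⟨δ, hδ, θ, hθ, hs⟩ := hstrict ε hε
      have hf : ∀ x, x0 < x → x < x0 + δ → f x ≤ pp lam x0 + ε := by
        intro x h1 h2
        by_contra hlt
        have hlt := (not_le.1 hlt).le
        by_cases hxa : 0 < a x
        · refine keyR a f (κ^2) M θ (pp lam x0 + ε) x0 x hac ha0 (by positivity) haK hd
            (fun z _ => hM z) hθ h1 hx0 hxa hlt ?_
          intro z hz hza hzf
          have := hs x0 z (f z) hx0 (by rw [abs_lt]; constructor <;> linarith [hz.1, hz.2])
            (hM z) (Or.inl hzf)
          linarith [hode z hza]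
        · have hxa := haz x hxa
          have := hs x0 x (f x) hx0 (by rw [abs_lt]; constructor <;> linarith)
            (hM x) (Or.inl hlt)
          rw [hext x hxa] at this
          linarith [hHpp x hxa]
      have hsl' : Tendsto (slope φ x0) (𝓝[>] x0) (𝓝 (deriv φ x0)) :=
        hslope.mono_left (nhdsWithin_mono _ fun x hx => ne_of_gt hx)
      have : deriv φ x0 ≤ pp lam x0 + ε := by
        refine le_of_tendsto hsl' ?_
        filter_upwards [self_mem_nhdsWithin, nhdsWithin_le_nhds hloc,
          nhdsWithin_le_nhds (Iio_mem_nhds (show x0 < x0 + δ by linarith))] with x h1 h2 h3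
        have h1 : x0 < x := h1
        have h3 : x < x0 + δ := h3
        have h4 : (∫ t in x0..x, f t) ≤ (x - x0) * (pp lam x0 + ε) := by
          have := intervalIntegral.integral_mono_on_of_le_Ioo (g := fun _ => pp lam x0 + ε)
            (f := f) h1.le (hint x0 x) intervalIntegrable_const
            (fun t ht => hf t ht.1 (ht.2.trans h3))
          rwa [intervalIntegral.integral_const, smul_eq_mul] at this
        rw [← hsub x x0] at h4
        rw [slope_def_field, div_le_iff₀ (by linarith)]
        linarith
      linarith
end
end
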